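/- arXiv:0910.3603 — 2 statements merged into one kernel-verified Lean document; each statement's English description precedes it below -/
import Mathlib

section
/- Suppose in addition that E is a finite set and the observability condition holds: for all μ, ν ∈ P(E), Q_μ = Q_ν implies μ = ν. Then the filter transition kernel Π admits a unique Π-invariant probability measure on P(E). -/
open MeasureTheory Filter Topology ENNReal

/-- `P(E)`: probability vectors on a countable set `E`, with the topology of
pointwise (equivalently, weak) convergence inherited from `E → ℝ`. -/
abbrev ProbVec (E : Type*) := {p : E → ℝ // (∀ i, 0 ≤ p i) ∧ HasSum p 1}

/-- Row-vector/matrix product `(p M(y))_j = ∑_i p_i M_{ij}(y)`. -/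
noncomputable def rowMul {E F : Type*} (M : F → E → E → ℝ) (p : E → ℝ) (y : F) : E → ℝ :=
  fun j => ∑' i, p i * M y i j

/-- Iterated product `p M(y₁)⋯M(yₙ)` along a list of observations. -/
noncomputable def rowIter {E F : Type*} (M : F → E → E → ℝ) (p : E → ℝ) (ys : List F) : E → ℝ :=
  ys.foldl (rowMul M) p

/-- `p 1 = ∑_j p_j`. -/
noncomputable def rowTot {E : Type*} (p : E → ℝ) : ℝ := ∑' j, p j

/-- One step of the filter: `μ ↦ μM(y)/(μM(y)1)` (junk value `μ` when undefined). -/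
noncomputable def filterStep {E F : Type*} (M : F → E → E → ℝ) (μ : ProbVec E) (y : F) :
    ProbVec E := by
  classical
  exact if h : ∃ ν : ProbVec E, ∀ j,
      (ν : E → ℝ) j * rowTot (rowMul M (μ : E → ℝ) y) = rowMul M (μ : E → ℝ) y j
    then h.choose else μ

/-- The filter `μM(y₁)⋯M(yₙ)/(μM(y₁)⋯M(yₙ)1)` (junk value `μ` when undefined). -/
noncomputable def filterList {E F : Type*} (M : F → E → E → ℝ) (μ : ProbVec E) (ys : List F) :
    ProbVec E := by
  classical
  exact if h : ∃ ν : ProbVec E, ∀ j,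
      (ν : E → ℝ) j * rowTot (rowIter M (μ : E → ℝ) ys) = rowIter M (μ : E → ℝ) ys j
    then h.choose else μ

/-- The filter `π_n^μ(y)` as a function of the observation path `y : ℕ → F`
(the coordinate `y k` represents the observation `y_{k+1}`). -/
noncomputable def filterSeq {E F : Type*} (M : F → E → E → ℝ) (μ : ProbVec E) (y : ℕ → F)
    (n : ℕ) : ProbVec E :=
  filterList M μ (List.ofFn fun k : Fin n => y k)

/-- The filter transition kernel `Π`, acting on functions:
`Πf(μ) = ∫ f(μM(y)/(μM(y)1)) ⬝ (μM(y)1) φ(dy)`. -/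
noncomputable def filterKernel {E F : Type*} [MeasurableSpace F] (M : F → E → E → ℝ)
    (φ : Measure F) (f : ProbVec E → ℝ) (μ : ProbVec E) : ℝ :=
  ∫ y, f (filterStep M μ y) * rowTot (rowMul M (μ : E → ℝ) y) ∂φ

/-- Bounded continuous real functions on `P(E)`. -/
def IsBddCont {E : Type*} (f : ProbVec E → ℝ) : Prop :=
  Continuous f ∧ ∃ C : ℝ, ∀ μ, |f μ| ≤ C

/-- A probability measure `𝕄` on `P(E)` is `Π`-invariant if `∫ Πf d𝕄 = ∫ f d𝕄`
for every bounded continuous `f`. -/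
def IsPiInvariant {E F : Type*} [MeasurableSpace F] (M : F → E → E → ℝ) (φ : Measure F)
    (𝕄 : ProbabilityMeasure (ProbVec E)) : Prop :=
  ∀ f : ProbVec E → ℝ, IsBddCont f →
    ∫ μ, filterKernel M φ f μ ∂(𝕄 : Measure (ProbVec E)) =
      ∫ μ, f μ ∂(𝕄 : Measure (ProbVec E))

/-- The signal transition matrix `P_{ij} = ∫ M_{ij}(y) φ(dy)`. -/
noncomputable def transMat {E F : Type*} [MeasurableSpace F] (M : F → E → E → ℝ)
    (φ : Measure F) : E → E → ℝ :=
  fun i j => ∫ y, M y i j ∂φ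

/-- Powers of a transition matrix on a countable state space. -/
noncomputable def matPow {E : Type*} [DecidableEq E] (P : E → E → ℝ) : ℕ → E → E → ℝ
  | 0 => fun i j => if i = j then 1 else 0
  | n + 1 => fun i j => ∑' k, matPow P n i k * P k j

/-!
Existence is the Krylov–Bogoliubov argument: `P(E)` is a compact simplex and `Π` is Feller, because
`p ↦ (p1) f(p / p1)` is continuous on the nonnegative orthant, including at `0`.

For uniqueness, let `𝕄` be invariant. Its barycenter `λ` is a stationary law of the signal, and
`𝕄`-almost every `μ` satisfies `μ ≤ K λ` for some constant `K`. Under the law `Q_λ` the second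
moment of the likelihood ratio `dQ_μ/dQ_λ` of the first `n` observations increases with `n` and is
bounded by `K`, so its increments over blocks of a fixed length `N` tend to zero. With `p` and `q`
the unnormalised filters started from `μ` and `λ`, such an increment controls the total variation
of the law of the next `N` observations under the signed measure `p - (p1 / q1) q`. By observability
and finite dimensionality this total variation is, for some `N`, at least a constant times the norm
of `p - (p1 / q1) q`, which is the mass of `p` times the distance between the two filters. Hence
the filters started from `μ` and from `λ` merge in mean under `Q_μ`.

Averaging over `μ` with law `𝕄` gives `Πⁿ f(λ) → ∫ f d𝕄` for Lipschitz `f`. So `𝕄` is determined by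
`λ`, which is the only stationary law.
-/

section Measures

theorem lintegral_pi_fin_succ {F : Type*} [MeasurableSpace F] {φ : Measure F} [SigmaFinite φ]
    {n : ℕ} {g : (Fin (n + 1) → F) → ℝ≥0∞} (hg : Measurable g) :
    ∫⁻ ys, g ys ∂(Measure.pi fun _ => φ) =
      ∫⁻ y, ∫⁻ ys, g (Fin.cons y ys) ∂(Measure.pi fun _ : Fin n => φ) ∂φ := by
  have e := (measurePreserving_piFinSuccAbove (fun _ : Fin (n + 1) => φ) 0).symm
  refine (e.lintegral_comp hg).symm.trans
    ((lintegral_prod _ (hg.comp e.measurable).aemeasurable).trans ?_)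
  simp only [Function.comp_apply, MeasurableEquiv.piFinSuccAbove_symm_apply, Fin.insertNthEquiv,
    Fin.insertNth_zero, Equiv.coe_fn_mk, cast_eq]

theorem ext_of_initialSegments {F : Type*} [MeasurableSpace F] {P Q : Measure (ℕ → F)}
    [IsProbabilityMeasure P] [IsProbabilityMeasure Q]
    (h : ∀ (n : ℕ) (A : Set (Fin n → F)), MeasurableSet A →
      P {y | (fun k : Fin n => y k) ∈ A} = Q {y | (fun k : Fin n => y k) ∈ A}) :
    P = Q := by
  refine ext_of_generate_finite (measurableCylinders fun _ : ℕ => F)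
    generateFrom_measurableCylinders.symm isPiSystem_measurableCylinders ?_ (by simp)
  intro t ht
  obtain ⟨s, S, hS, rfl⟩ := (mem_measurableCylinders t).1 ht
  have lt_bound (i : s) : (i : ℕ) < s.sup id + 1 :=
    Nat.lt_succ_of_le (Finset.le_sup (f := id) i.2)
  have measurable_restrict :
      Measurable fun (v : Fin (s.sup id + 1) → F) (i : s) => v ⟨i, lt_bound i⟩ := by fun_prop
  exact h (s.sup id + 1) _ (measurable_restrict hS)

theorem probabilityMeasure_ext_of_lipschitz {X : Type*} [PseudoEMetricSpace X] [CompactSpace X]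
    [MeasurableSpace X] [BorelSpace X] {P Q : ProbabilityMeasure X}
    (h : ∀ (L : NNReal) (f : X → ℝ), (∀ x, 0 ≤ f x) → LipschitzWith L f →
      ∫ x, f x ∂(P : Measure X) = ∫ x, f x ∂(Q : Measure X)) :
    P = Q := by
  refine tendsto_nhds_unique (tendsto_const_nhds (f := (atTop : Filter ℕ)))
    (tendsto_iff_forall_lipschitz_integral_tendsto.2 fun f _ ⟨L, hf⟩ => ?_)
  obtain ⟨C, hC⟩ := (isCompact_range hf.continuous).bddBelow
  have integrable (R : ProbabilityMeasure X) : Integrable f (R : Measure X) :=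
    hf.continuous.integrable_of_hasCompactSupport (HasCompactSupport.of_compactSpace f)
  have shifted := h L (fun x => f x - C) (fun x => sub_nonneg.2 (hC ⟨x, rfl⟩))
    (by simpa using hf.sub (LipschitzWith.const C))
  rw [integral_sub (integrable P) (integrable_const C),
    integral_sub (integrable Q) (integrable_const C)] at shifted
  simp only [integral_const, probReal_univ, sub_left_inj] at shifted
  rw [shifted]
  exact tendsto_const_nhds

theorem exists_probabilityMeasure_integral_eq {X : Type*} [TopologicalSpace X] [CompactSpace X]
    [T2Space X] [MeasurableSpace X] [BorelSpace X] (Λ : C(X, ℝ) →ₗ[ℝ] ℝ)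
    (hΛ : ∀ f, 0 ≤ f → 0 ≤ Λ f) (hΛ1 : Λ 1 = 1) :
    ∃ P : ProbabilityMeasure X, ∀ f : C(X, ℝ), ∫ x, f x ∂(P : Measure X) = Λ f := by
  let Λ' : CompactlySupportedContinuousMap X ℝ →ₚ[ℝ] ℝ := PositiveLinearMap.mk₀
    { toFun f := Λ f.toContinuousMap
      map_add' f g := Λ.map_add f.toContinuousMap g.toContinuousMap
      map_smul' c f := Λ.map_smul c f.toContinuousMap } fun f hf => hΛ f.toContinuousMap hf
  have integral_eq (f : C(X, ℝ)) : ∫ x, f x ∂(RealRMK.rieszMeasure Λ') = Λ f :=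
    RealRMK.integral_rieszMeasure Λ' (CompactlySupportedContinuousMap.continuousMapEquiv f)
  have total_mass := integral_eq 1
  simp only [ContinuousMap.one_apply, integral_const, smul_eq_mul, mul_one, hΛ1,
    Measure.real] at total_mass
  exact ⟨⟨RealRMK.rieszMeasure Λ', ⟨(ENNReal.toReal_eq_one_iff _).1 total_mass⟩⟩, integral_eq⟩

end Measures

section KrylovBogoliubov

variable {X : Type*} [TopologicalSpace X] {T : Module.End ℝ C(X, ℝ)}

/-- Positive unital operators on `C(X)`, the Markov operators with the Feller property. -/
structure IsMarkovOperator (T : Module.End ℝ C(X, ℝ)) : Prop where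
  map_nonneg : ∀ f, 0 ≤ f → 0 ≤ T f
  map_one : T 1 = 1

namespace IsMarkovOperator

theorem pow (hT : IsMarkovOperator T) (n : ℕ) : IsMarkovOperator (T ^ n) := by
  induction n with
  | zero => exact ⟨fun _ hf => hf, rfl⟩
  | succ n ih =>
    simp only [pow_succ']
    exact ⟨fun f hf => hT.map_nonneg _ (ih.map_nonneg f hf), by simp [ih.map_one, hT.map_one]⟩

theorem abs_apply_le [CompactSpace X] (hT : IsMarkovOperator T) (f : C(X, ℝ)) (x : X) :
    |T f x| ≤ ‖f‖ := by
  have upper : 0 ≤ (T (‖f‖ • 1 - f)) x := hT.map_nonneg _ (fun z => by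
    simpa using (le_abs_self _).trans (f.norm_coe_le_norm z)) x
  have lower : 0 ≤ (T (‖f‖ • 1 + f)) x := hT.map_nonneg _ (fun z => by
    simpa using neg_le_iff_add_nonneg'.1 ((abs_le.1 (f.norm_coe_le_norm z)).1)) x
  simp only [map_sub, map_add, map_smul, hT.map_one, ContinuousMap.sub_apply,
    ContinuousMap.add_apply, ContinuousMap.smul_apply, ContinuousMap.one_apply, smul_eq_mul,
    mul_one] at upper lower
  exact abs_le.2 ⟨by linarith, by linarith⟩

variable [CompactSpace X] [T2Space X] [MeasurableSpace X] [BorelSpace X]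

theorem exists_cesaro_measure (hT : IsMarkovOperator T) (x : X) (n : ℕ) :
    ∃ P : ProbabilityMeasure X, ∀ f : C(X, ℝ), ∫ z, f z ∂(P : Measure X) =
      ((n : ℝ) + 1)⁻¹ * ∑ k ∈ Finset.range (n + 1), (T ^ k) f x := by
  let Λ : C(X, ℝ) →ₗ[ℝ] ℝ := ((n : ℝ) + 1)⁻¹ • ∑ k ∈ Finset.range (n + 1),
    (ContinuousMap.evalCLM ℝ x).toLinearMap ∘ₗ T ^ k
  have Λ_apply (f : C(X, ℝ)) :
      Λ f = ((n : ℝ) + 1)⁻¹ * ∑ k ∈ Finset.range (n + 1), (T ^ k) f x := by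
    simp [Λ]
  obtain ⟨P, hP⟩ := exists_probabilityMeasure_integral_eq Λ
    (fun f hf => by
      rw [Λ_apply]
      exact mul_nonneg (by positivity) (Finset.sum_nonneg fun k _ => (hT.pow k).map_nonneg f hf x))
    (by
      simp only [Λ_apply, (hT.pow _).map_one, ContinuousMap.one_apply, Finset.sum_const,
        Finset.card_range, nsmul_eq_mul, mul_one, Nat.cast_add, Nat.cast_one]
      exact inv_mul_cancel₀ (by positivity))
  exact ⟨P, fun f => (hP f).trans (Λ_apply f)⟩

theorem exists_invariant [Nonempty X] (hT : IsMarkovOperator T) :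
    ∃ P : ProbabilityMeasure X, ∀ f : C(X, ℝ),
      ∫ x, T f x ∂(P : Measure X) = ∫ x, f x ∂(P : Measure X) := by
  obtain ⟨x⟩ := ‹Nonempty X›
  choose P hP using hT.exists_cesaro_measure x
  obtain ⟨R, -, hR⟩ := isCompact_univ.ultrafilter_le_nhds ((hyperfilter ℕ).map P) (by simp)
  have tendsto_integral (f : C(X, ℝ)) : Tendsto (fun n => ∫ z, f z ∂(P n : Measure X))
      (hyperfilter ℕ) (𝓝 (∫ z, f z ∂(R : Measure X))) :=
    ProbabilityMeasure.tendsto_iff_forall_integral_tendsto.1 hR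
      (BoundedContinuousFunction.mkOfCompact f)
  refine ⟨R, fun f => ?_⟩
  have telescope (n : ℕ) : ∫ z, T f z ∂(P n : Measure X) - ∫ z, f z ∂(P n : Measure X) =
      ((n : ℝ) + 1)⁻¹ * ((T ^ (n + 1)) f x - f x) := by
    have sum_eq := Finset.sum_range_sub (fun k => (T ^ k) f x) (n + 1)
    rw [hP, hP, ← mul_sub, ← Finset.sum_sub_distrib]
    simpa [pow_succ] using congrArg (((n : ℝ) + 1)⁻¹ * ·) sum_eq
  have difference_bound (n : ℕ) : ‖((n : ℝ) + 1)⁻¹ * ((T ^ (n + 1)) f x - f x)‖ ≤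
      (‖f‖ + ‖f‖) / ((n : ℝ) + 1) := by
    rw [norm_mul, norm_inv, Real.norm_of_nonneg (by positivity : (0 : ℝ) ≤ n + 1), div_eq_inv_mul]
    gcongr
    exact (norm_sub_le _ _).trans
      (add_le_add ((hT.pow _).abs_apply_le f x) (f.norm_coe_le_norm x))
  have difference_tendsto : Tendsto
      (fun n => ∫ z, T f z ∂(P n : Measure X) - ∫ z, f z ∂(P n : Measure X))
      (hyperfilter ℕ) (𝓝 0) := by
    simp only [telescope]
    exact (squeeze_zero_norm difference_bound
      ((tendsto_const_div_atTop_nhds_zero_nat (‖f‖ + ‖f‖)).comp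
      (tendsto_add_atTop_nat 1) |>.congr fun n => by simp)).mono_left Nat.hyperfilter_le_atTop
  exact sub_eq_zero.1 (tendsto_nhds_unique
    ((tendsto_integral (T f)).sub (tendsto_integral f)) difference_tendsto)

end IsMarkovOperator

end KrylovBogoliubov

theorem tendsto_zero_of_sq_add_le {D V : ℕ → ℝ≥0∞} {C : ℝ≥0∞} {N : ℕ} (hVmono : Monotone V)
    (hVC : ∀ n, V n ≤ C) (hC : C ≠ ∞) (h : ∀ n, D n ^ 2 + V n ≤ V (n + N)) :
    Tendsto D atTop (𝓝 0) := by
  have sup_ne_top : ⨆ n, V n ≠ ∞ := ne_top_of_le_ne_top hC (iSup_le hVC)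
  have V_ne_top (n : ℕ) : V n ≠ ∞ := ne_top_of_le_ne_top hC (hVC n)
  have tendsto_V := tendsto_atTop_iSup hVmono
  have tendsto_gap : Tendsto (fun n => V (n + N) - V n) atTop (𝓝 0) := by
    simpa using ENNReal.Tendsto.sub ((tendsto_add_atTop_iff_nat N).2 tendsto_V) tendsto_V
      (Or.inl sup_ne_top)
  have tendsto_sq : Tendsto (fun n => D n ^ 2) atTop (𝓝 0) :=
    tendsto_of_tendsto_of_tendsto_of_le_of_le tendsto_const_nhds tendsto_gap
      (fun _ => zero_le) fun n => ENNReal.le_sub_of_add_le_right (V_ne_top n) (h n)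
  have tendsto_sqrt := tendsto_sq.ennrpow_const (2⁻¹ : ℝ)
  simp only [← ENNReal.rpow_natCast, ← ENNReal.rpow_mul] at tendsto_sqrt
  simpa using tendsto_sqrt

namespace ProbVec

variable {E : Type*}

theorem coe_le_one (μ : ProbVec E) (i : E) : (μ : E → ℝ) i ≤ 1 :=
  le_hasSum μ.2.2 i fun j _ => μ.2.1 j

instance [Nonempty E] : Nonempty (ProbVec E) := by
  classical
  obtain ⟨i⟩ := ‹Nonempty E›
  have single_nonneg : 0 ≤ (Pi.single i 1 : E → ℝ) := Pi.single_nonneg.2 zero_le_one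
  exact ⟨⟨Pi.single i 1, single_nonneg, hasSum_pi_single i 1⟩⟩

instance [Finite E] : CompactSpace (ProbVec E) := by
  have := Fintype.ofFinite E
  suffices {p : E → ℝ | (∀ i, 0 ≤ p i) ∧ HasSum p 1} = stdSimplex ℝ E from
    isCompact_iff_compactSpace.1 ((congrArg IsCompact this).mpr (isCompact_stdSimplex ℝ E))
  ext p
  exact and_congr_right fun _ =>
    ⟨fun h => by simpa [tsum_fintype] using h.tsum_eq, fun h => h ▸ hasSum_fintype p⟩

end ProbVec

section Simplex

variable {E : Type*} [Fintype E]

/-- The total mass `p 1` of a nonnegative vector as an extended nonnegative real, the form in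
which it enters Lebesgue integrals over the observations. -/
noncomputable def mass (p : E → ℝ) : ℝ≥0∞ := ENNReal.ofReal (∑ i, p i)

theorem measurable_mass : Measurable (mass : (E → ℝ) → ℝ≥0∞) := by
  unfold mass
  fun_prop

namespace ProbVec

theorem sum_coe (μ : ProbVec E) : ∑ i, (μ : E → ℝ) i = 1 := by
  simpa [tsum_fintype] using μ.2.2.tsum_eq

@[simp]
theorem mass_coe (μ : ProbVec E) : mass (μ : E → ℝ) = 1 := by simp [mass, μ.sum_coe]

/-- A nonnegative vector whose entries sum to `1`, as a probability vector. -/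
def ofSumEqOne (p : E → ℝ) (hp : 0 ≤ p) (hsum : ∑ i, p i = 1) : ProbVec E :=
  ⟨p, hp, hsum ▸ hasSum_fintype p⟩

theorem edist_le_one (μ ν : ProbVec E) : edist μ ν ≤ 1 := by
  rw [← ENNReal.ofReal_one, edist_le_ofReal zero_le_one]
  refine (dist_pi_le_iff zero_le_one).2 fun i => ?_
  rw [Real.dist_eq, abs_le]
  constructor <;> linarith [μ.2.1 i, ν.2.1 i, μ.coe_le_one i, ν.coe_le_one i]

variable [Nonempty E]

/-- The probability vector `p / (p 1)` proportional to a nonnegative vector `p ≠ 0`, with an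
arbitrary value for all other `p`. -/
noncomputable def normalize (p : E → ℝ) : ProbVec E :=
  Function.extend Subtype.val id (fun _ => Classical.arbitrary _) ((∑ i, p i)⁻¹ • p)

theorem coe_normalize {p : E → ℝ} (hp : 0 ≤ p) (hsum : ∑ i, p i ≠ 0) :
    (normalize p : E → ℝ) = (∑ i, p i)⁻¹ • p := by
  let ν := ofSumEqOne ((∑ i, p i)⁻¹ • p)
    (smul_nonneg (inv_nonneg.2 (Finset.sum_nonneg fun i _ => hp i)) hp)
    (by simp [← Finset.mul_sum, hsum])
  exact congrArg Subtype.val (Subtype.val_injective.extend_apply id _ ν)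

@[simp]
theorem normalize_coe (μ : ProbVec E) : normalize (μ : E → ℝ) = μ :=
  Subtype.ext (by simp [coe_normalize μ.2.1, μ.sum_coe])

theorem sum_smul_normalize {p : E → ℝ} (hp : 0 ≤ p) :
    (∑ i, p i) • (normalize p : E → ℝ) = p := by
  by_cases hsum : ∑ i, p i = 0
  · ext i
    simpa [hsum] using ((Finset.sum_eq_zero_iff_of_nonneg fun i _ => hp i).1 hsum i
      (Finset.mem_univ i)).symm
  · rw [coe_normalize hp hsum, smul_inv_smul₀ hsum]

theorem normalize_smul {c : ℝ} (hc : c ≠ 0) (p : E → ℝ) : normalize (c • p) = normalize p := by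
  have : (∑ i, (c • p) i)⁻¹ • c • p = (∑ i, p i)⁻¹ • p := by
    simp only [Pi.smul_apply, smul_eq_mul, ← Finset.mul_sum, mul_inv, smul_smul]
    rw [mul_right_comm, inv_mul_cancel₀ hc, one_mul]
  rw [normalize, this, normalize]

theorem measurable_normalize : Measurable (normalize : (E → ℝ) → ProbVec E) := by
  have embedding : MeasurableEmbedding (Subtype.val : ProbVec E → E → ℝ) :=
    continuous_subtype_val.isClosedEmbedding Subtype.val_injective |>.measurableEmbedding
  exact (embedding.measurable_extend measurable_id measurable_const).comp (by fun_prop)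

end ProbVec

end Simplex

theorem measurePreserving_finAppend {F : Type*} [MeasurableSpace F] {φ : Measure F} [SigmaFinite φ]
    (m n : ℕ) :
    MeasurePreserving (fun z : (Fin m → F) × (Fin n → F) => Fin.append z.1 z.2)
      ((Measure.pi fun _ => φ).prod (Measure.pi fun _ => φ)) (Measure.pi fun _ => φ) := by
  have measurable_append : Measurable fun z : (Fin m → F) × (Fin n → F) => Fin.append z.1 z.2 :=
    measurable_pi_lambda _ fun i => by
      induction i using Fin.addCases <;> simp only [Fin.append_left, Fin.append_right] <;> fun_prop
  refine ⟨measurable_append, (Measure.pi_eq fun s hs => ?_).symm⟩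
  have preimage_box : (fun z : (Fin m → F) × (Fin n → F) => Fin.append z.1 z.2) ⁻¹' Set.univ.pi s =
      (Set.univ.pi fun i => s (Fin.castAdd n i)) ×ˢ (Set.univ.pi fun i => s (Fin.natAdd m i)) := by
    ext z
    simp [Fin.forall_fin_add]
  rw [Measure.map_apply measurable_append (.univ_pi hs), preimage_box, Measure.prod_prod,
    Measure.pi_pi, Measure.pi_pi, Fin.prod_univ_add]

theorem lintegral_pi_fin_add {F : Type*} [MeasurableSpace F] {φ : Measure F} [SigmaFinite φ]
    {m n : ℕ} {g : (Fin (m + n) → F) → ℝ≥0∞} (hg : Measurable g) :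
    ∫⁻ ys, g ys ∂(Measure.pi fun _ => φ) =
      ∫⁻ ys, ∫⁻ zs, g (Fin.append ys zs) ∂(Measure.pi fun _ : Fin n => φ)
        ∂(Measure.pi fun _ : Fin m => φ) := by
  have e := measurePreserving_finAppend (φ := φ) m n
  exact (e.lintegral_comp hg).symm.trans (lintegral_prod _ (hg.comp e.measurable).aemeasurable)

section Paths

variable {E F : Type*} {M : F → E → E → ℝ}

theorem rowTot_eq_sum [Fintype E] (p : E → ℝ) : rowTot p = ∑ i, p i := tsum_fintype p

theorem rowMul_apply [Fintype E] (M : F → E → E → ℝ) (p : E → ℝ) (y : F) (j : E) :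
    rowMul M p y j = ∑ i, p i * M y i j := tsum_fintype _

theorem rowMul_nonneg (hM : ∀ y i j, 0 ≤ M y i j) {p : E → ℝ} (hp : 0 ≤ p) (y : F) :
    0 ≤ rowMul M p y := fun j => tsum_nonneg fun i => mul_nonneg (hp i) (hM y i j)

theorem rowMul_smul (M : F → E → E → ℝ) (c : ℝ) (p : E → ℝ) (y : F) :
    rowMul M (c • p) y = c • rowMul M p y := by
  ext j
  simp only [rowMul, Pi.smul_apply, smul_eq_mul, mul_assoc, tsum_mul_left]

theorem rowIter_smul (M : F → E → E → ℝ) (c : ℝ) (p : E → ℝ) (ys : List F) :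
    rowIter M (c • p) ys = c • rowIter M p ys := by
  induction ys generalizing p with
  | nil => rfl
  | cons y ys ih => simpa [rowIter, rowMul_smul] using ih (rowMul M p y)

variable [Finite E]

theorem rowMul_add (M : F → E → E → ℝ) (p q : E → ℝ) (y : F) :
    rowMul M (p + q) y = rowMul M p y + rowMul M q y := by
  have := Fintype.ofFinite E
  ext j
  simp only [rowMul_apply, Pi.add_apply, add_mul, Finset.sum_add_distrib]

theorem rowIter_add (M : F → E → E → ℝ) (p q : E → ℝ) (ys : List F) :
    rowIter M (p + q) ys = rowIter M p ys + rowIter M q ys := by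
  induction ys generalizing p q with
  | nil => rfl
  | cons y ys ih => simpa [rowIter, rowMul_add] using ih (rowMul M p y) (rowMul M q y)

/-- The unnormalised filter `p ↦ pM(y₁)⋯M(yₙ)` along a tuple of observations, as a linear map. -/
noncomputable def rowPath (M : F → E → E → ℝ) {n : ℕ} (ys : Fin n → F) :
    (E → ℝ) →ₗ[ℝ] E → ℝ where
  toFun p := rowIter M p (List.ofFn ys)
  map_add' p q := rowIter_add M p q _
  map_smul' c p := rowIter_smul M c p _

@[simp]
theorem rowPath_zero (ys : Fin 0 → F) (p : E → ℝ) : rowPath M ys p = p := by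
  simp [rowPath, rowIter]

@[simp]
theorem rowPath_cons {n : ℕ} (y : F) (ys : Fin n → F) (p : E → ℝ) :
    rowPath M (Fin.cons y ys : Fin (n + 1) → F) p = rowPath M ys (rowMul M p y) := by
  simp [rowPath, rowIter]

@[simp]
theorem rowPath_append {m n : ℕ} (ys : Fin m → F) (zs : Fin n → F) (p : E → ℝ) :
    rowPath M (Fin.append ys zs) p = rowPath M zs (rowPath M ys p) := by
  simp [rowPath, rowIter, List.ofFn_fin_append]

theorem rowPath_nonneg (hM : ∀ y i j, 0 ≤ M y i j) {n : ℕ} (ys : Fin n → F) {p : E → ℝ}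
    (hp : 0 ≤ p) : 0 ≤ rowPath M ys p := by
  induction ys using Fin.consInduction generalizing p with
  | elim0 => simpa
  | cons y ys ih => simpa using ih (rowMul_nonneg hM hp y)

theorem rowPath_mono (hM : ∀ y i j, 0 ≤ M y i j) {n : ℕ} (ys : Fin n → F) :
    Monotone (rowPath M ys) := fun p q hpq => by
  simpa using rowPath_nonneg hM ys (sub_nonneg.2 hpq)

theorem rowPath_le_smul (hM : ∀ y i j, 0 ≤ M y i j) {n : ℕ} (ys : Fin n → F) {p q : E → ℝ}
    {K : ℝ} (hpq : p ≤ K • q) : rowPath M ys p ≤ K • rowPath M ys q := by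
  simpa using rowPath_mono hM ys hpq

variable [MeasurableSpace F]

theorem measurable_rowMul (hM : ∀ i j, Measurable fun y => M y i j) :
    Measurable fun x : (E → ℝ) × F => rowMul M x.1 x.2 := by
  have := Fintype.ofFinite E
  refine measurable_pi_lambda _ fun j => ?_
  simp only [rowMul_apply]
  fun_prop

theorem measurable_rowPath (hM : ∀ i j, Measurable fun y => M y i j) (n : ℕ) :
    Measurable fun x : (E → ℝ) × (Fin n → F) => rowPath M x.2 x.1 := by
  induction n with
  | zero => simpa using measurable_fst
  | succ n ih =>
    have measurable_step : Measurable fun x : (E → ℝ) × (Fin (n + 1) → F) =>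
        (rowMul M x.1 (x.2 0), Fin.tail x.2) := by
      refine ((measurable_rowMul hM).comp (measurable_fst.prodMk
        ((measurable_pi_apply 0).comp measurable_snd))).prodMk ?_
      unfold Fin.tail
      fun_prop
    convert! ih.comp measurable_step using 1
    ext x : 1
    rw [Function.comp_apply, ← rowPath_cons, Fin.cons_self_tail]

theorem measurable_rowPath_right (hM : ∀ i j, Measurable fun y => M y i j) {n : ℕ} (p : E → ℝ) :
    Measurable fun ys : Fin n → F => rowPath M ys p :=
  (measurable_rowPath hM n).comp measurable_prodMk_left

theorem measurable_mass_rowPath {E : Type*} [Fintype E] {M : F → E → E → ℝ}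
    (hM : ∀ i j, Measurable fun y => M y i j) {n : ℕ} (p : E → ℝ) :
    Measurable fun ys : Fin n → F => mass (rowPath M ys p) :=
  measurable_mass.comp (measurable_rowPath_right hM p)

end Paths

section Density

variable {E F : Type*} [Fintype E] [MeasurableSpace F] {M : F → E → E → ℝ} {φ : Measure F}

/-- The entries of `M` are densities with respect to `φ` of the joint law of the next state and
the next observation given the current state: they are nonnegative and integrable, and the
transition matrix `P = ∫ M dφ` is stochastic. -/
structure IsHMMDensity (M : F → E → E → ℝ) (φ : Measure F) : Prop where
  measurable : ∀ i j, Measurable fun y => M y i j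
  nonneg : ∀ y i j, 0 ≤ M y i j
  integrable : ∀ i j, Integrable (fun y => M y i j) φ
  sum_transMat : ∀ i, ∑ j, transMat M φ i j = 1

namespace IsHMMDensity

variable (hM : IsHMMDensity M φ)

include hM

theorem integrable_rowMul (p : E → ℝ) (j : E) : Integrable (fun y => rowMul M p y j) φ := by
  simp only [rowMul_apply]
  exact integrable_finsetSum _ fun i _ => (hM.integrable i j).const_mul (p i)

theorem integral_rowMul (p : E → ℝ) (j : E) :
    ∫ y, rowMul M p y j ∂φ = ∑ i, p i * transMat M φ i j := by
  simp only [rowMul_apply, transMat]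
  rw [integral_finsetSum _ fun i _ => (hM.integrable i j).const_mul (p i)]
  simp only [integral_const_mul]

theorem integrable_sum_rowMul (p : E → ℝ) : Integrable (fun y => ∑ j, rowMul M p y j) φ :=
  integrable_finsetSum _ fun j _ => hM.integrable_rowMul p j

theorem integral_sum_rowMul (p : E → ℝ) : ∫ y, ∑ j, rowMul M p y j ∂φ = ∑ i, p i := by
  rw [integral_finsetSum _ fun j _ => hM.integrable_rowMul p j]
  simp only [hM.integral_rowMul]
  rw [Finset.sum_comm]
  simp only [← Finset.mul_sum, hM.sum_transMat, mul_one]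

theorem lintegral_mass_rowMul {p : E → ℝ} (hp : 0 ≤ p) :
    ∫⁻ y, mass (rowMul M p y) ∂φ = mass p := by
  simp only [mass]
  rw [← ofReal_integral_eq_lintegral_ofReal (hM.integrable_sum_rowMul p)
    (.of_forall fun y => Finset.sum_nonneg fun j _ => rowMul_nonneg hM.nonneg hp y j),
    hM.integral_sum_rowMul]

theorem lintegral_mass_rowPath [SigmaFinite φ] (n : ℕ) {p : E → ℝ} (hp : 0 ≤ p) :
    ∫⁻ ys : Fin n → F, mass (rowPath M ys p) ∂(Measure.pi fun _ => φ) = mass p := by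
  induction n generalizing p with
  | zero => simp
  | succ n ih =>
    rw [lintegral_pi_fin_succ (measurable_mass_rowPath hM.measurable p)]
    simp only [rowPath_cons, ih (rowMul_nonneg hM.nonneg hp _),
      hM.lintegral_mass_rowMul hp]

end IsHMMDensity

end Density

section Observability

variable {E F : Type*} [Fintype E] [MeasurableSpace F] {M : F → E → E → ℝ} {φ : Measure F}

/-- The total variation norm `∫ |vM(y₁)⋯M(yₙ)1| φ(dy₁)⋯φ(dyₙ)` of the law of the first `n`
observations when the signal is started from the signed measure `v`. -/
noncomputable def obsNorm (M : F → E → E → ℝ) (φ : Measure F) (n : ℕ) (v : E → ℝ) : ℝ≥0∞ :=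
  ∫⁻ ys : Fin n → F, ‖∑ i, rowPath M ys v i‖ₑ ∂(Measure.pi fun _ => φ)

theorem measurable_sum_rowPath (hM : ∀ i j, Measurable fun y => M y i j) {n : ℕ} (v : E → ℝ) :
    Measurable fun ys : Fin n → F => ∑ i, rowPath M ys v i :=
  Finset.measurable_sum _ fun i _ => (measurable_pi_apply i).comp
    (measurable_rowPath_right hM v)

theorem obsNorm_smul (n : ℕ) (c : ℝ) (v : E → ℝ) :
    obsNorm M φ n (c • v) = ‖c‖ₑ * obsNorm M φ n v := by
  simp only [obsNorm, map_smul, Pi.smul_apply, smul_eq_mul, ← Finset.mul_sum, enorm_mul]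
  exact lintegral_const_mul' _ _ enorm_ne_top

theorem ae_sum_rowPath_eq_zero (hM : ∀ i j, Measurable fun y => M y i j) {n : ℕ} {v : E → ℝ}
    (h : obsNorm M φ n v = 0) :
    ∀ᵐ ys : Fin n → F ∂(Measure.pi fun _ => φ), ∑ i, rowPath M ys v i = 0 := by
  filter_upwards [(lintegral_eq_zero_iff (measurable_sum_rowPath hM v).enorm).1 h] with ys hys
  exact enorm_eq_zero.1 hys

namespace IsHMMDensity

variable [SigmaFinite φ]

theorem monotone_obsNorm (hM : IsHMMDensity M φ) (v : E → ℝ) :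
    Monotone fun n => obsNorm M φ n v := by
  have obsNorm_succ (n : ℕ) (v : E → ℝ) :
      obsNorm M φ (n + 1) v = ∫⁻ y, obsNorm M φ n (rowMul M v y) ∂φ := by
    rw [obsNorm, lintegral_pi_fin_succ (measurable_sum_rowPath hM.measurable v).enorm]
    simp only [rowPath_cons, obsNorm]
  refine monotone_nat_of_le_succ fun n => ?_
  induction n generalizing v with
  | zero =>
    rw [obsNorm_succ]
    simpa [obsNorm, hM.integral_sum_rowMul] using
      enorm_integral_le_lintegral_enorm (μ := φ) fun y => ∑ j, rowMul M v y j
  | succ n ih =>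
    rw [obsNorm_succ, obsNorm_succ]
    exact lintegral_mono fun y => ih _

theorem obsNorm_le_mass_abs (hM : IsHMMDensity M φ) (n : ℕ) (v : E → ℝ) :
    obsNorm M φ n v ≤ mass |v| := by
  rw [← hM.lintegral_mass_rowPath n (abs_nonneg v)]
  refine lintegral_mono fun ys => ?_
  have upper := rowPath_mono hM.nonneg ys (le_abs_self v)
  have lower : rowPath M ys (-|v|) ≤ rowPath M ys v :=
    rowPath_mono hM.nonneg ys fun i => neg_abs_le (v i)
  rw [map_neg] at lower
  rw [mass, Real.enorm_eq_ofReal_abs]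
  refine ENNReal.ofReal_le_ofReal (abs_le.2 ⟨?_, Finset.sum_le_sum fun i _ => upper i⟩)
  rw [← Finset.sum_neg_distrib]
  exact Finset.sum_le_sum fun i _ => lower i

theorem integrable_sum_rowPath (hM : IsHMMDensity M φ) (n : ℕ) (v : E → ℝ) :
    Integrable (fun ys : Fin n → F => ∑ i, rowPath M ys v i) (Measure.pi fun _ => φ) :=
  ⟨(measurable_sum_rowPath hM.measurable v).aestronglyMeasurable,
    (hM.obsNorm_le_mass_abs n v).trans_lt ENNReal.ofReal_lt_top⟩

/-- The signed density `(y₁, …, yₙ) ↦ vM(y₁)⋯M(yₙ)1` of the law of the first `n` observations,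
as a linear function of the initial signed measure `v` with values in `L¹`. -/
noncomputable def obsDensity (hM : IsHMMDensity M φ) (n : ℕ) :
    (E → ℝ) →ₗ[ℝ] Lp ℝ 1 (Measure.pi fun _ : Fin n => φ) where
  toFun v := (hM.integrable_sum_rowPath n v).toL1 _
  map_add' v w := by
    rw [← Integrable.toL1_add]
    congr 1
    ext ys
    simp only [map_add, Pi.add_apply, Finset.sum_add_distrib]
  map_smul' c v := by
    rw [RingHom.id_apply, ← Integrable.toL1_smul]
    simp [Finset.mul_sum]

theorem enorm_obsDensity (hM : IsHMMDensity M φ) (n : ℕ) (v : E → ℝ) :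
    ‖hM.obsDensity n v‖ₑ = obsNorm M φ n v :=
  Integrable.enorm_toL1 (hM.integrable_sum_rowPath n v)

theorem exists_ker_obsDensity_eq_bot (hM : IsHMMDensity M φ)
    (hinj : ∀ v, (∀ n, obsNorm M φ n v = 0) → v = 0) :
    ∃ N, LinearMap.ker (hM.obsDensity N) = ⊥ := by
  have mem_ker {n : ℕ} {v : E → ℝ} :
      v ∈ LinearMap.ker (hM.obsDensity n) ↔ obsNorm M φ n v = 0 := by
    rw [LinearMap.mem_ker, ← hM.enorm_obsDensity, enorm_eq_zero]
  let kernels : ℕ →o (Submodule ℝ (E → ℝ))ᵒᵈ :=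
    ⟨fun n => OrderDual.toDual (LinearMap.ker (hM.obsDensity n)), fun m n hmn v hv =>
      mem_ker.2 (le_antisymm ((hM.monotone_obsNorm v hmn).trans_eq (mem_ker.1 hv)) zero_le)⟩
  obtain ⟨N, hN⟩ := IsArtinian.monotone_stabilizes kernels
  refine ⟨N, (Submodule.eq_bot_iff _).2 fun v hv => hinj v fun n => ?_⟩
  rcases le_total n N with hn | hn
  · exact mem_ker.1 (kernels.monotone hn hv)
  · exact mem_ker.1 ((hN n hn).ge hv)

theorem exists_mul_enorm_le_obsNorm (hM : IsHMMDensity M φ)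
    (hinj : ∀ v, (∀ n, obsNorm M φ n v = 0) → v = 0) :
    ∃ N, ∃ c : ℝ≥0∞, c ≠ 0 ∧ c ≠ ∞ ∧ ∀ v, c * ‖v‖ₑ ≤ obsNorm M φ N v := by
  obtain ⟨N, hN⟩ := hM.exists_ker_obsDensity_eq_bot hinj
  obtain ⟨K, hK, hanti⟩ := (hM.obsDensity N).exists_antilipschitzWith hN
  refine ⟨N, (K : ℝ≥0∞)⁻¹, by simp, by simpa using hK.ne', fun v => ?_⟩
  rw [ENNReal.inv_mul_le_iff (by simpa using hK.ne') (by simp), ← hM.enorm_obsDensity]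
  simpa [edist_zero_right] using hanti v 0

end IsHMMDensity

end Observability

section ObservationLaw

variable {E F : Type*} [MeasurableSpace F] {M : F → E → E → ℝ} {φ : Measure F}

/-- `P` is the law `Q_μ` of the observation sequence of the hidden Markov model when the signal is
started from `μ`; coordinate `k` of a path is the observation `y_{k+1}`. -/
def IsObservationLaw (M : F → E → E → ℝ) (φ : Measure F) (μ : ProbVec E) (P : Measure (ℕ → F)) :
    Prop :=
  ∀ (n : ℕ) (A : Set (Fin n → F)), MeasurableSet A →
    P {y | (fun k : Fin n => y k) ∈ A} =
      ∫⁻ v in A, ENNReal.ofReal (rowTot (rowIter M (μ : E → ℝ) (List.ofFn v)))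
        ∂(Measure.pi fun _ => φ)

variable [Fintype E] {μ ν : ProbVec E} {P P' : Measure (ℕ → F)}

namespace IsObservationLaw

theorem measure_eq_setLIntegral_mass (hP : IsObservationLaw M φ μ P) {n : ℕ}
    {A : Set (Fin n → F)} (hA : MeasurableSet A) :
    P {y | (fun k : Fin n => y k) ∈ A} = ∫⁻ ys in A, mass (rowPath M ys μ)
      ∂(Measure.pi fun _ => φ) := by
  rw [hP n A hA]
  simp only [rowTot_eq_sum]
  rfl

variable [IsProbabilityMeasure P]

theorem lintegral_mass_rowMul [SigmaFinite φ] (hM : ∀ i j, Measurable fun y => M y i j)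
    (hP : IsObservationLaw M φ μ P) : ∫⁻ y, mass (rowMul M μ y) ∂φ = 1 := by
  have total := hP.measure_eq_setLIntegral_mass (n := 0 + 1) MeasurableSet.univ
  rw [setLIntegral_univ, lintegral_pi_fin_succ (measurable_mass_rowPath hM _)] at total
  simpa using total.symm

theorem eq_of_obsNorm_sub_eq_zero [IsProbabilityMeasure P']
    (hM : ∀ i j, Measurable fun y => M y i j) (hP : IsObservationLaw M φ μ P)
    (hP' : IsObservationLaw M φ ν P') (h : ∀ n, obsNorm M φ n (μ - ν : E → ℝ) = 0) : P = P' := by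
  refine ext_of_initialSegments fun n A hA => ?_
  rw [hP.measure_eq_setLIntegral_mass hA, hP'.measure_eq_setLIntegral_mass hA]
  refine lintegral_congr_ae (ae_restrict_of_ae ?_)
  filter_upwards [ae_sum_rowPath_eq_zero hM (h n)] with ys hys
  simp only [map_sub, Pi.sub_apply, Finset.sum_sub_distrib] at hys
  rw [mass, mass, sub_eq_zero.1 hys]

end IsObservationLaw

theorem isHMMDensity_of_isObservationLaw [SigmaFinite φ]
    (hmeas : ∀ i j, Measurable fun y => M y i j) (hnn : ∀ y i j, 0 ≤ M y i j)
    {Q : ProbVec E → Measure (ℕ → F)} [∀ μ, IsProbabilityMeasure (Q μ)]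
    (hQ : ∀ μ, IsObservationLaw M φ μ (Q μ)) : IsHMMDensity M φ := by
  classical
  have lintegral_row (i : E) : ∫⁻ y, mass (M y i) ∂φ = 1 := by
    let δ : ProbVec E := .ofSumEqOne (Pi.single i 1) (Pi.single_nonneg.2 zero_le_one) (by simp)
    have rowMul_single (y : F) : rowMul M δ y = M y i := by
      ext j
      simp [δ, ProbVec.ofSumEqOne, rowMul_apply, Pi.single_apply]
    simpa only [rowMul_single] using (hQ δ).lintegral_mass_rowMul hmeas
  have integrable_entry (i j : E) : Integrable (fun y => M y i j) φ := by
    refine ⟨(hmeas i j).aestronglyMeasurable, lt_of_le_of_lt ?_ ENNReal.one_lt_top⟩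
    rw [← lintegral_row i]
    refine lintegral_mono fun y => ?_
    rw [Real.enorm_of_nonneg (hnn y i j)]
    exact ENNReal.ofReal_le_ofReal
      (Finset.single_le_sum (fun k _ => hnn y i k) (Finset.mem_univ j))
  refine ⟨hmeas, hnn, integrable_entry, fun i => ?_⟩
  simp only [transMat]
  rw [← integral_finsetSum _ fun j _ => integrable_entry i j, integral_eq_lintegral_of_nonneg_ae
    (.of_forall fun y => Finset.sum_nonneg fun j _ => hnn y i j)
    (Finset.measurable_sum _ fun j _ => hmeas i j).aestronglyMeasurable]
  exact (congrArg ENNReal.toReal (lintegral_row i)).trans ENNReal.toReal_one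

theorem eq_zero_of_obsNorm_eq_zero [Nonempty E]
    (hident : ∀ μ ν : ProbVec E, (∀ n, obsNorm M φ n (μ - ν : E → ℝ) = 0) → μ = ν)
    {v : E → ℝ} (hv : ∀ n, obsNorm M φ n v = 0) : v = 0 := by
  have sum_parts : ∑ i, v⁺ i = ∑ i, v⁻ i := by
    have sum_v : ∑ i, v i = 0 := by simpa [obsNorm] using hv 0
    rwa [← posPart_sub_negPart v, Finset.sum_congr rfl fun i _ => Pi.sub_apply _ _ i,
      Finset.sum_sub_distrib, sub_eq_zero] at sum_v
  let t := ∑ i, v⁺ i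
  have v_eq : v = t • (ProbVec.normalize v⁺ - ProbVec.normalize v⁻ : E → ℝ) := by
    rw [smul_sub, ProbVec.sum_smul_normalize (posPart_nonneg v), show t = _ from sum_parts,
      ProbVec.sum_smul_normalize (negPart_nonneg v), posPart_sub_negPart]
  rcases eq_or_ne t 0 with ht | ht
  · rw [v_eq, ht, zero_smul]
  · have normalize_eq : ProbVec.normalize v⁺ = ProbVec.normalize v⁻ := hident _ _ fun n => by
      have scaled := hv n
      rw [v_eq, obsNorm_smul, mul_eq_zero] at scaled
      exact scaled.resolve_left (by simpa using ht)
    rw [v_eq, normalize_eq, sub_self, smul_zero]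

end ObservationLaw

section Stability

theorem two_mul_abs_sub_add_le {a b l t : ℝ} (hb : 0 ≤ b) (hab : b = 0 → a = 0) :
    2 * t * |a - l * b| + 2 * l * a ≤ (t ^ 2 + l ^ 2) * b + a ^ 2 / b := by
  rcases hb.eq_or_lt' with rfl | hb
  · simp [hab rfl]
  · have key : (t ^ 2 + l ^ 2) * b + a ^ 2 / b - (2 * t * |a - l * b| + 2 * l * a) =
        (|a - l * b| - t * b) ^ 2 / b := by
      rw [sub_sq, sq_abs]
      field_simp
      ring
    linarith [div_nonneg (sq_nonneg (|a - l * b| - t * b)) hb.le]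

variable {E F : Type*} [Fintype E] [MeasurableSpace F] {M : F → E → E → ℝ} {φ : Measure F}
  {p q : E → ℝ} {K : ℝ}

theorem sum_le_mul_sum (hpq : p ≤ K • q) : ∑ i, p i ≤ K * ∑ i, q i :=
  (Finset.sum_le_sum fun i _ => hpq i).trans_eq (by simp [Finset.mul_sum])

theorem sum_eq_zero_of_le_smul (hp : 0 ≤ p) (hpq : p ≤ K • q) (hq : ∑ i, q i = 0) :
    ∑ i, p i = 0 :=
  le_antisymm (by simpa [hq] using sum_le_mul_sum hpq) (Fintype.sum_nonneg hp)

/-- The contribution `(p1)² / q1` of an observation path to the second moment of the likelihood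
ratio of the observations, `p` and `q` being the unnormalised filters started from two initial
laws. It is used for `p ≤ K q` only, so that the numerator vanishes with the denominator. -/
noncomputable def ratioSq (p q : E → ℝ) : ℝ≥0∞ := ENNReal.ofReal ((∑ i, p i) ^ 2 / ∑ i, q i)

theorem measurable_ratioSq {α : Type*} [MeasurableSpace α] {f g : α → E → ℝ} (hf : Measurable f)
    (hg : Measurable g) : Measurable fun a => ratioSq (f a) (g a) := by
  unfold ratioSq
  fun_prop

theorem ratioSq_le (hp : 0 ≤ p) (hq : 0 ≤ q) (hpq : p ≤ K • q) :
    ratioSq p q ≤ ENNReal.ofReal K * mass p := by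
  have sum_p_nonneg : 0 ≤ ∑ i, p i := Fintype.sum_nonneg hp
  rcases (Fintype.sum_nonneg hq).eq_or_lt' with sum_q | sum_q
  · simp [ratioSq, sum_q]
  · rw [ratioSq, mass, ← ENNReal.ofReal_mul' sum_p_nonneg]
    refine ENNReal.ofReal_le_ofReal ((div_le_iff₀ sum_q).2 ?_)
    nlinarith [sum_le_mul_sum hpq]

theorem enorm_sum_sub_smul_add_le (hp : 0 ≤ p) (hq : 0 ≤ q) (hpq : p ≤ K • q) (l t : NNReal) :
    2 * t * ‖∑ i, (p - (l : ℝ) • q) i‖ₑ + 2 * l * mass p ≤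
      (t ^ 2 + l ^ 2) * mass q + ratioSq p q := by
  have sum_p_nonneg : 0 ≤ ∑ i, p i := Fintype.sum_nonneg hp
  have sum_q_nonneg : 0 ≤ ∑ i, q i := Fintype.sum_nonneg hq
  have coe_eq (x : NNReal) : (x : ℝ≥0∞) = ENNReal.ofReal x := (ENNReal.ofReal_coe_nnreal).symm
  have two_eq : (2 : ℝ≥0∞) = ENNReal.ofReal 2 := by simp
  have sum_sub : ∑ i, (p - (l : ℝ) • q) i = ∑ i, p i - l * ∑ i, q i := by
    simp [Finset.mul_sum]
  rw [sum_sub, Real.enorm_eq_ofReal_abs, mass, mass, ratioSq, coe_eq, coe_eq, two_eq,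
    ← ENNReal.ofReal_pow t.coe_nonneg, ← ENNReal.ofReal_pow l.coe_nonneg]
  repeat rw [← ENNReal.ofReal_mul (by positivity)]
  rw [← ENNReal.ofReal_add (by positivity) (by positivity),
    ← ENNReal.ofReal_add (by positivity) (by positivity), ← ENNReal.ofReal_mul (by positivity),
    ← ENNReal.ofReal_add (by positivity) (by positivity)]
  exact ENNReal.ofReal_le_ofReal
    (two_mul_abs_sub_add_le sum_q_nonneg (sum_eq_zero_of_le_smul hp hpq))

namespace IsHMMDensity

variable [SigmaFinite φ] (hM : IsHMMDensity M φ)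

include hM

theorem obsNorm_sub_smul_add_le (n : ℕ) (hp : 0 ≤ p) (hq : 0 ≤ q) (hpq : p ≤ K • q)
    (l t : NNReal) :
    2 * t * obsNorm M φ n (p - (l : ℝ) • q) + 2 * l * mass p ≤
      (t ^ 2 + l ^ 2) * mass q + ∫⁻ ys : Fin n → F, ratioSq (rowPath M ys p) (rowPath M ys q)
        ∂(Measure.pi fun _ => φ) := by
  have measurable_mass (r : E → ℝ) := measurable_mass_rowPath hM.measurable (n := n) r
  rw [← hM.lintegral_mass_rowPath n hp, ← hM.lintegral_mass_rowPath n hq, obsNorm,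
    ← lintegral_const_mul' _ _ (by finiteness), ← lintegral_const_mul' _ _ (by finiteness),
    ← lintegral_const_mul' _ _ (by finiteness),
    ← lintegral_add_right _ ((measurable_mass p).const_mul (2 * l : ℝ≥0∞)),
    ← lintegral_add_left ((measurable_mass q).const_mul (t ^ 2 + l ^ 2 : ℝ≥0∞))]
  refine lintegral_mono fun ys => ?_
  simpa using enorm_sum_sub_smul_add_le (rowPath_nonneg hM.nonneg ys hp)
    (rowPath_nonneg hM.nonneg ys hq) (rowPath_le_smul hM.nonneg ys hpq) l t

theorem obsNorm_sub_smul_add_ratioSq_le (n : ℕ) (hp : 0 ≤ p) (hq : 0 ≤ q) (hpq : p ≤ K • q)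
    (t : NNReal) :
    2 * t * obsNorm M φ n (p - ((∑ i, p i) / ∑ i, q i) • q) + ratioSq p q ≤
      t ^ 2 * mass q + ∫⁻ ys : Fin n → F, ratioSq (rowPath M ys p) (rowPath M ys q)
        ∂(Measure.pi fun _ => φ) := by
  have ratio_nonneg : 0 ≤ (∑ i, p i) / ∑ i, q i :=
    div_nonneg (Fintype.sum_nonneg hp) (Fintype.sum_nonneg hq)
  let l : NNReal := ⟨(∑ i, p i) / ∑ i, q i, ratio_nonneg⟩
  have l_eq : (l : ℝ≥0∞) = ENNReal.ofReal ((∑ i, p i) / ∑ i, q i) :=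
    (ENNReal.ofReal_coe_nnreal (p := l)).symm
  have l_mul_mass_p : l * mass p = ratioSq p q := by
    rw [l_eq, mass, ratioSq, ← ENNReal.ofReal_mul ratio_nonneg, pow_two, div_mul_eq_mul_div]
  have l_sq_mul_mass_q : l ^ 2 * mass q = ratioSq p q := by
    rw [← l_mul_mass_p, pow_two, mul_assoc, l_eq, mass, mass, ← ENNReal.ofReal_mul ratio_nonneg,
      div_mul_cancel_of_imp (sum_eq_zero_of_le_smul hp hpq)]
  refine (ENNReal.add_le_add_iff_right (a := ratioSq p q) ENNReal.ofReal_ne_top).1 ?_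
  calc _ = 2 * t * obsNorm M φ n (p - (l : ℝ) • q) + 2 * l * mass p := by
        rw [mul_assoc 2 (l : ℝ≥0∞), l_mul_mass_p, two_mul (ratioSq p q), add_assoc]; rfl
    _ ≤ _ := hM.obsNorm_sub_smul_add_le n hp hq hpq l t
    _ = _ := by rw [add_mul, l_sq_mul_mass_q, add_right_comm]

end IsHMMDensity

theorem enorm_sub_smul_eq_mass_mul_edist [Nonempty E] (hp : 0 ≤ p) (hq : 0 ≤ q)
    (hpq : p ≤ K • q) :
    ‖p - ((∑ i, p i) / ∑ i, q i) • q‖ₑ =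
      mass p * edist (ProbVec.normalize p) (ProbVec.normalize q) := by
  have smul_q : ((∑ i, p i) / ∑ i, q i) • q = (∑ i, p i) • (ProbVec.normalize q : E → ℝ) :=
    calc _ = ((∑ i, p i) / ∑ i, q i) • (∑ i, q i) • (ProbVec.normalize q : E → ℝ) := by
          rw [ProbVec.sum_smul_normalize hq]
      _ = _ := by rw [smul_smul, div_mul_cancel_of_imp (sum_eq_zero_of_le_smul hp hpq)]
  have factored : p - ((∑ i, p i) / ∑ i, q i) • q =
      (∑ i, p i) • (ProbVec.normalize p - ProbVec.normalize q : E → ℝ) := by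
    rw [smul_q, smul_sub, ProbVec.sum_smul_normalize hp]
  rw [factored, enorm_smul, Real.enorm_of_nonneg (Fintype.sum_nonneg hp),
    ← edist_eq_enorm_sub, Subtype.edist_eq, mass]

end Stability

section FilterGap

variable {E F : Type*} [Fintype E] [MeasurableSpace F] {M : F → E → E → ℝ} {φ : Measure F}
  {p q : E → ℝ} {K : ℝ}

/-- The second moment, under the law of the first `n` observations started from `q`, of the
likelihood ratio with respect to `q` of the observations started from `p`. -/
noncomputable def expectedRatioSq (M : F → E → E → ℝ) (φ : Measure F) (n : ℕ) (p q : E → ℝ) :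
    ℝ≥0∞ :=
  ∫⁻ ys : Fin n → F, ratioSq (rowPath M ys p) (rowPath M ys q) ∂(Measure.pi fun _ => φ)

/-- The distance between the normalisations of two nonnegative vectors, weighted by the mass of
the first. -/
noncomputable def weightedEdist [Nonempty E] (p q : E → ℝ) : ℝ≥0∞ :=
  mass p * edist (ProbVec.normalize p) (ProbVec.normalize q)

/-- The expected distance at time `n` between the filters started from `p` and from `q`, when the
observations follow the law started from `p`. -/
noncomputable def filterGap [Nonempty E] (M : F → E → E → ℝ) (φ : Measure F) (n : ℕ)
    (p q : E → ℝ) : ℝ≥0∞ :=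
  ∫⁻ ys : Fin n → F, weightedEdist (rowPath M ys p) (rowPath M ys q) ∂(Measure.pi fun _ => φ)

theorem measurable_weightedEdist [Nonempty E] {α : Type*} [MeasurableSpace α] {f g : α → E → ℝ}
    (hf : Measurable f) (hg : Measurable g) : Measurable fun a => weightedEdist (f a) (g a) :=
  (measurable_mass.comp hf).mul
    ((ProbVec.measurable_normalize.comp hf).edist (ProbVec.measurable_normalize.comp hg))

namespace IsHMMDensity

variable [SigmaFinite φ] (hM : IsHMMDensity M φ)

include hM

theorem expectedRatioSq_add (n N : ℕ) (p q : E → ℝ) :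
    expectedRatioSq M φ (n + N) p q = ∫⁻ ys : Fin n → F,
      expectedRatioSq M φ N (rowPath M ys p) (rowPath M ys q) ∂(Measure.pi fun _ => φ) := by
  have measurable_ratio := measurable_ratioSq
    (measurable_rowPath_right hM.measurable (n := n + N) p)
    (measurable_rowPath_right hM.measurable q)
  simp only [expectedRatioSq, lintegral_pi_fin_add measurable_ratio, rowPath_append]

theorem ratioSq_le_expectedRatioSq (n : ℕ) (hp : 0 ≤ p) (hq : 0 ≤ q) (hpq : p ≤ K • q) :
    ratioSq p q ≤ expectedRatioSq M φ n p q := by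
  simpa [expectedRatioSq] using hM.obsNorm_sub_smul_add_ratioSq_le n hp hq hpq 0

theorem monotone_expectedRatioSq (hp : 0 ≤ p) (hq : 0 ≤ q) (hpq : p ≤ K • q) :
    Monotone fun n => expectedRatioSq M φ n p q := by
  refine monotone_nat_of_le_succ fun n => ?_
  rw [hM.expectedRatioSq_add]
  exact lintegral_mono fun ys => hM.ratioSq_le_expectedRatioSq 1 (rowPath_nonneg hM.nonneg ys hp)
    (rowPath_nonneg hM.nonneg ys hq) (rowPath_le_smul hM.nonneg ys hpq)

theorem expectedRatioSq_le (n : ℕ) (hp : 0 ≤ p) (hq : 0 ≤ q) (hpq : p ≤ K • q) :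
    expectedRatioSq M φ n p q ≤ ENNReal.ofReal K * mass p := by
  rw [← hM.lintegral_mass_rowPath n hp, ← lintegral_const_mul' _ _ ENNReal.ofReal_ne_top]
  exact lintegral_mono fun ys => ratioSq_le (rowPath_nonneg hM.nonneg ys hp)
    (rowPath_nonneg hM.nonneg ys hq) (rowPath_le_smul hM.nonneg ys hpq)

variable [Nonempty E]

theorem filterGap_le_mass (n : ℕ) (hp : 0 ≤ p) (q : E → ℝ) : filterGap M φ n p q ≤ mass p := by
  rw [← hM.lintegral_mass_rowPath n hp]
  exact lintegral_mono fun ys => mul_le_of_le_one_right' (ProbVec.edist_le_one _ _)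

variable {N : ℕ} {c : ℝ≥0∞}

theorem mul_filterGap_add_expectedRatioSq_le (hc : c ≠ ∞)
    (hobs : ∀ v, c * ‖v‖ₑ ≤ obsNorm M φ N v) (n : ℕ) (hp : 0 ≤ p) (hq : 0 ≤ q)
    (hpq : p ≤ K • q) (t : NNReal) :
    2 * t * (c * filterGap M φ n p q) + expectedRatioSq M φ n p q ≤
      t ^ 2 * mass q + expectedRatioSq M φ (n + N) p q := by
  have measurable_gap := measurable_weightedEdist
    (measurable_rowPath_right hM.measurable (n := n) p) (measurable_rowPath_right hM.measurable q)
  have measurable_mass := measurable_mass_rowPath hM.measurable (n := n) q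
  rw [hM.expectedRatioSq_add, ← hM.lintegral_mass_rowPath n hq, ← mul_assoc, filterGap,
    expectedRatioSq, ← lintegral_const_mul' _ _ (by finiteness),
    ← lintegral_const_mul' _ _ (by finiteness),
    ← lintegral_add_left (measurable_gap.const_mul (2 * t * c)),
    ← lintegral_add_left (measurable_mass.const_mul (t ^ 2 : ℝ≥0∞))]
  refine lintegral_mono fun ys => ?_
  have hp' := rowPath_nonneg hM.nonneg ys hp
  have hq' := rowPath_nonneg hM.nonneg ys hq
  have hpq' := rowPath_le_smul hM.nonneg ys hpq
  refine le_trans ?_ (hM.obsNorm_sub_smul_add_ratioSq_le N hp' hq' hpq' t)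
  rw [weightedEdist, ← enorm_sub_smul_eq_mass_mul_edist hp' hq' hpq', mul_assoc]
  gcongr
  exact hobs _

theorem tendsto_filterGap (hinj : ∀ v, (∀ n, obsNorm M φ n v = 0) → v = 0) (hp : 0 ≤ p)
    (hq : 0 ≤ q) (hpq : p ≤ K • q) (hqmass : mass q = 1) :
    Tendsto (fun n => filterGap M φ n p q) atTop (𝓝 0) := by
  obtain ⟨N, c, hc0, hc, hobs⟩ := hM.exists_mul_enorm_le_obsNorm hinj
  have gap_ne_top (n : ℕ) : c * filterGap M φ n p q ≠ ∞ := ENNReal.mul_ne_top hc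
    (ne_top_of_le_ne_top ENNReal.ofReal_ne_top (hM.filterGap_le_mass n hp q))
  have increment (n : ℕ) : (c * filterGap M φ n p q) ^ 2 + expectedRatioSq M φ n p q ≤
      expectedRatioSq M φ (n + N) p q := by
    have tested := hM.mul_filterGap_add_expectedRatioSq_le hc hobs n hp hq hpq
      (c * filterGap M φ n p q).toNNReal
    rw [ENNReal.coe_toNNReal (gap_ne_top n), hqmass, mul_one, mul_assoc, ← pow_two, two_mul,
      add_assoc] at tested
    exact (ENNReal.add_le_add_iff_left (ENNReal.pow_ne_top (gap_ne_top n))).1 tested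
  have tendsto_mul := tendsto_zero_of_sq_add_le (hM.monotone_expectedRatioSq hp hq hpq)
    (fun n => hM.expectedRatioSq_le n hp hq hpq)
    (ENNReal.mul_ne_top ENNReal.ofReal_ne_top ENNReal.ofReal_ne_top) increment
  simpa [ENNReal.inv_mul_cancel_left hc0 hc] using
    ENNReal.Tendsto.const_mul tendsto_mul (Or.inr (ENNReal.inv_ne_top.2 hc0))

end IsHMMDensity

end FilterGap

section FilterOperator

variable {E F : Type*} [Fintype E] [Nonempty E]

/-- The positively homogeneous extension `p ↦ (p1) f(p / p1)` of a function on the probability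
vectors to the nonnegative vectors. -/
noncomputable def homogExtend (f : ProbVec E → ℝ) (p : E → ℝ) : ℝ :=
  (∑ i, p i) * f (ProbVec.normalize p)

@[simp]
theorem homogExtend_coe (f : ProbVec E → ℝ) (μ : ProbVec E) : homogExtend f μ = f μ := by
  simp [homogExtend, μ.sum_coe]

theorem homogExtend_smul (f : ProbVec E → ℝ) (c : ℝ) (p : E → ℝ) :
    homogExtend f (c • p) = c * homogExtend f p := by
  rcases eq_or_ne c 0 with rfl | hc
  · simp [homogExtend]
  · simp only [homogExtend, ProbVec.normalize_smul hc, Pi.smul_apply, smul_eq_mul,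
      ← Finset.mul_sum, mul_assoc]

theorem homogExtend_nonneg {f : ProbVec E → ℝ} (hf : 0 ≤ f) {p : E → ℝ} (hp : 0 ≤ p) :
    0 ≤ homogExtend f p := mul_nonneg (Fintype.sum_nonneg hp) (hf _)

theorem norm_homogExtend_le (f : C(ProbVec E, ℝ)) {p : E → ℝ} (hp : 0 ≤ p) :
    ‖homogExtend f p‖ ≤ (∑ i, p i) * ‖f‖ := by
  rw [homogExtend, norm_mul, Real.norm_of_nonneg (Fintype.sum_nonneg hp)]
  exact mul_le_mul_of_nonneg_left (f.norm_coe_le_norm _) (Fintype.sum_nonneg hp)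

theorem measurable_homogExtend {f : ProbVec E → ℝ} (hf : Measurable f) {α : Type*}
    [MeasurableSpace α] {g : α → E → ℝ} (hg : Measurable g) :
    Measurable fun a => homogExtend f (g a) :=
  (Finset.measurable_sum _ fun i _ => (measurable_pi_apply i).comp hg).mul
    (hf.comp (ProbVec.measurable_normalize.comp hg))

theorem continuousOn_homogExtend (f : C(ProbVec E, ℝ)) :
    ContinuousOn (homogExtend f) (Set.Ici 0) := by
  have continuous_sum : Continuous fun p : E → ℝ => ∑ i, p i := by fun_prop
  intro p hp
  rcases eq_or_ne (∑ i, p i) 0 with sum_eq_zero | sum_ne_zero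
  · rw [ContinuousWithinAt, homogExtend, sum_eq_zero, zero_mul]
    have tendsto_bound : Tendsto (fun q : E → ℝ => (∑ i, q i) * ‖f‖) (𝓝[Set.Ici 0] p) (𝓝 0) := by
      simpa [sum_eq_zero] using
        ((continuous_sum.mul_const ‖f‖).tendsto p).mono_left nhdsWithin_le_nhds
    exact squeeze_zero_norm' (eventually_nhdsWithin_of_forall fun q hq => norm_homogExtend_le f hq)
      tendsto_bound
  · refine continuous_sum.continuousWithinAt.mul (f.continuous.continuousAt.comp_continuousWithinAt
      (Topology.IsInducing.subtypeVal.continuousWithinAt_iff.2 ?_))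
    refine ((continuous_sum.continuousAt.inv₀ sum_ne_zero).smul
      continuousAt_id).continuousWithinAt.congr_of_eventuallyEq ?_
      (ProbVec.coe_normalize hp sum_ne_zero)
    filter_upwards [self_mem_nhdsWithin, nhdsWithin_le_nhds
      (continuous_sum.continuousAt.eventually_ne sum_ne_zero)] with q hq hq_sum
    exact ProbVec.coe_normalize hq hq_sum

variable {M : F → E → E → ℝ}

theorem sum_smul_filterStep (hM : ∀ y i j, 0 ≤ M y i j) (μ : ProbVec E) (y : F) :
    (∑ j, rowMul M μ y j) • (filterStep M μ y : E → ℝ) = rowMul M μ y := by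
  have solvable : ∃ ν : ProbVec E, ∀ j,
      (ν : E → ℝ) j * rowTot (rowMul M (μ : E → ℝ) y) = rowMul M (μ : E → ℝ) y j :=
    ⟨ProbVec.normalize (rowMul M μ y), fun j => by
      simpa [rowTot_eq_sum, mul_comm] using
        congrFun (ProbVec.sum_smul_normalize (rowMul_nonneg hM μ.2.1 y)) j⟩
  ext j
  rw [filterStep, dif_pos solvable, Pi.smul_apply, smul_eq_mul, mul_comm, ← rowTot_eq_sum]
  exact solvable.choose_spec j

theorem filterKernel_eq_integral_homogExtend [MeasurableSpace F] (φ : Measure F)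
    (hM : ∀ y i j, 0 ≤ M y i j) (f : ProbVec E → ℝ) (μ : ProbVec E) :
    filterKernel M φ f μ = ∫ y, homogExtend f (rowMul M μ y) ∂φ := by
  refine integral_congr_ae (.of_forall fun y => ?_)
  beta_reduce
  rw [← sum_smul_filterStep hM μ y, homogExtend_smul, homogExtend_coe, sum_smul_filterStep hM,
    rowTot_eq_sum, mul_comm]

variable [MeasurableSpace F] {φ : Measure F}

namespace IsHMMDensity

variable (hM : IsHMMDensity M φ)

include hM

theorem integrable_homogExtend_rowMul (f : C(ProbVec E, ℝ)) {p : E → ℝ} (hp : 0 ≤ p) :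
    Integrable (fun y => homogExtend f (rowMul M p y)) φ := by
  refine ((hM.integrable_sum_rowMul p).mul_const ‖f‖).mono' ?_
    (.of_forall fun y => norm_homogExtend_le f (rowMul_nonneg hM.nonneg hp y))
  exact (measurable_homogExtend f.continuous.measurable
    ((measurable_rowMul hM.measurable).comp measurable_prodMk_left)).aestronglyMeasurable

theorem continuous_integral_homogExtend (f : C(ProbVec E, ℝ)) :
    Continuous fun μ : ProbVec E => ∫ y, homogExtend f (rowMul M μ y) ∂φ := by
  have rowMul_le (μ : ProbVec E) (y : F) (j : E) : rowMul M μ y j ≤ rowMul M 1 y j := by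
    simp only [rowMul_apply]
    exact Finset.sum_le_sum fun i _ => mul_le_mul_of_nonneg_right (μ.coe_le_one i)
      (hM.nonneg y i j)
  refine continuous_of_dominated (bound := fun y => (∑ j, rowMul M 1 y j) * ‖f‖)
    (fun μ => (hM.integrable_homogExtend_rowMul f μ.2.1).aestronglyMeasurable)
    (fun μ => .of_forall fun y => ?_) ((hM.integrable_sum_rowMul 1).mul_const _)
    (.of_forall fun y => ?_)
  · exact (norm_homogExtend_le f (rowMul_nonneg hM.nonneg μ.2.1 y)).trans
      (mul_le_mul_of_nonneg_right (Finset.sum_le_sum fun j _ => rowMul_le μ y j) (norm_nonneg f))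
  · refine (continuousOn_homogExtend f).comp_continuous ?_
      fun μ => rowMul_nonneg hM.nonneg μ.2.1 y
    refine continuous_pi fun j => ?_
    simp only [rowMul_apply]
    exact continuous_finsetSum _ fun i _ =>
      ((continuous_apply i).comp continuous_subtype_val).mul_const _

/-- The filter transition kernel `Π` as an operator on the continuous functions on `P(E)`; that it
maps continuous functions to continuous functions is the Feller property. -/
noncomputable def filterOp : Module.End ℝ C(ProbVec E, ℝ) where
  toFun f := ⟨fun μ => ∫ y, homogExtend f (rowMul M μ y) ∂φ, hM.continuous_integral_homogExtend f⟩
  map_add' f g := by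
    ext μ
    rw [ContinuousMap.add_apply]
    simp only [ContinuousMap.coe_mk]
    rw [← integral_add (hM.integrable_homogExtend_rowMul f μ.2.1)
      (hM.integrable_homogExtend_rowMul g μ.2.1)]
    simp only [homogExtend, ContinuousMap.add_apply, mul_add]
  map_smul' c f := by
    ext μ
    simp [homogExtend, mul_left_comm _ c, integral_const_mul]

theorem filterOp_apply (f : C(ProbVec E, ℝ)) (μ : ProbVec E) :
    hM.filterOp f μ = ∫ y, homogExtend f (rowMul M μ y) ∂φ := rfl

theorem isMarkovOperator_filterOp : IsMarkovOperator hM.filterOp where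
  map_nonneg f hf μ :=
    integral_nonneg fun y => homogExtend_nonneg hf (rowMul_nonneg hM.nonneg μ.2.1 y)
  map_one := by
    ext μ
    simp [hM.filterOp_apply, homogExtend, hM.integral_sum_rowMul, μ.sum_coe]

theorem isPiInvariant_iff {𝕄 : ProbabilityMeasure (ProbVec E)} :
    IsPiInvariant M φ 𝕄 ↔
      ∀ f : C(ProbVec E, ℝ), ∫ μ, hM.filterOp f μ ∂(𝕄 : Measure (ProbVec E)) =
        ∫ μ, f μ ∂(𝕄 : Measure (ProbVec E)) := by
  simp only [hM.filterOp_apply, ← filterKernel_eq_integral_homogExtend φ hM.nonneg]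
  exact ⟨fun h f => h f ⟨f.continuous, ‖f‖, f.norm_coe_le_norm⟩, fun h f hf => h ⟨f, hf.1⟩⟩

theorem homogExtend_filterOp (f : C(ProbVec E, ℝ)) {p : E → ℝ} (hp : 0 ≤ p) :
    homogExtend (hM.filterOp f) p = ∫ y, homogExtend f (rowMul M p y) ∂φ := by
  rw [homogExtend, hM.filterOp_apply, ← integral_const_mul]
  simp only [← homogExtend_smul, ← rowMul_smul, ProbVec.sum_smul_normalize hp]

theorem lintegral_homogExtend_rowPath [SigmaFinite φ] {f : C(ProbVec E, ℝ)} (hf : 0 ≤ f) (n : ℕ)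
    {p : E → ℝ} (hp : 0 ≤ p) :
    ∫⁻ ys : Fin n → F, ENNReal.ofReal (homogExtend f (rowPath M ys p))
      ∂(Measure.pi fun _ => φ) = ENNReal.ofReal (homogExtend ((hM.filterOp ^ n) f) p) := by
  induction n generalizing p with
  | zero => simp
  | succ n ih =>
    rw [lintegral_pi_fin_succ (measurable_homogExtend f.continuous.measurable
      (measurable_rowPath_right hM.measurable p)).ennreal_ofReal]
    have iterate_nonneg : 0 ≤ (hM.filterOp ^ n) f :=
      (hM.isMarkovOperator_filterOp.pow n).map_nonneg f hf
    simp only [rowPath_cons, ih (rowMul_nonneg hM.nonneg hp _)]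
    rw [pow_succ', Module.End.mul_apply, hM.homogExtend_filterOp _ hp,
      ofReal_integral_eq_lintegral_ofReal (hM.integrable_homogExtend_rowMul _ hp)
        (.of_forall fun y => homogExtend_nonneg iterate_nonneg (rowMul_nonneg hM.nonneg hp y))]

end IsHMMDensity

end FilterOperator

section Barycenter

variable {E : Type*} [Fintype E]

namespace ProbVec

theorem integrable_coe (P : ProbabilityMeasure (ProbVec E)) :
    Integrable (fun μ : ProbVec E => (μ : E → ℝ)) (P : Measure (ProbVec E)) :=
  continuous_subtype_val.integrable_of_hasCompactSupport
    (HasCompactSupport.of_compactSpace _)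

theorem integral_linearMap_coe (P : ProbabilityMeasure (ProbVec E)) (l : (E → ℝ) →ₗ[ℝ] ℝ) :
    ∫ μ, l (μ : ProbVec E) ∂(P : Measure (ProbVec E)) =
      l (∫ μ, (μ : E → ℝ) ∂(P : Measure (ProbVec E))) :=
  l.toContinuousLinearMap.integral_comp_comm (integrable_coe P)

/-- The barycenter `∫ μ P(dμ)` of a probability measure on `P(E)`. -/
noncomputable def barycenter (P : ProbabilityMeasure (ProbVec E)) : ProbVec E :=
  ofSumEqOne (∫ μ, (μ : E → ℝ) ∂(P : Measure (ProbVec E)))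
    (fun i => by
      rw [← LinearMap.proj_apply (R := ℝ) i (∫ μ, (μ : E → ℝ) ∂(P : Measure (ProbVec E))),
        ← integral_linearMap_coe]
      exact integral_nonneg fun μ => μ.2.1 i)
    (by
      have := integral_linearMap_coe P (∑ i, LinearMap.proj i)
      simpa [sum_coe] using this.symm)

theorem integral_linearMap (P : ProbabilityMeasure (ProbVec E)) (l : (E → ℝ) →ₗ[ℝ] ℝ) :
    ∫ μ, l (μ : ProbVec E) ∂(P : Measure (ProbVec E)) = l (barycenter P) :=
  integral_linearMap_coe P l

theorem ae_le_smul_barycenter (P : ProbabilityMeasure (ProbVec E)) :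
    ∃ K : ℝ, ∀ᵐ μ : ProbVec E ∂(P : Measure (ProbVec E)),
      (μ : E → ℝ) ≤ K • (barycenter P : E → ℝ) := by
  let b := (barycenter P : E → ℝ)
  have b_nonneg : 0 ≤ b := (barycenter P).2.1
  refine ⟨∑ i, (b i)⁻¹, (ae_all_iff (ι := E)).2 fun i => ?_⟩
  rcases eq_or_ne (b i) 0 with b_eq | b_ne
  · have integral_coord : ∫ μ, (μ : E → ℝ) i ∂(P : Measure (ProbVec E)) = 0 :=
      (integral_linearMap P (LinearMap.proj i)).trans b_eq
    have coord_eq_zero := (integral_eq_zero_iff_of_nonneg (fun μ : ProbVec E => μ.2.1 i)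
      ((integrable_coe P).eval i)).1 integral_coord
    filter_upwards [coord_eq_zero] with μ hμ
    simpa [b_eq, b] using hμ.le
  · refine .of_forall fun μ => (μ.coe_le_one i).trans ?_
    calc 1 = (b i)⁻¹ * b i := (inv_mul_cancel₀ b_ne).symm
      _ ≤ (∑ j, (b j)⁻¹) * b i := mul_le_mul_of_nonneg_right
        (Finset.single_le_sum (f := fun j => (b j)⁻¹) (fun j _ => inv_nonneg.2 (b_nonneg j))
          (Finset.mem_univ i)) (b_nonneg i)

theorem lintegral_mass_linearMap (P : ProbabilityMeasure (ProbVec E))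
    (T : (E → ℝ) →ₗ[ℝ] E → ℝ) (hT : ∀ p, 0 ≤ p → 0 ≤ T p) :
    ∫⁻ μ, mass (T (μ : ProbVec E)) ∂(P : Measure (ProbVec E)) = mass (T (barycenter P)) := by
  let l : (E → ℝ) →ₗ[ℝ] ℝ := (∑ i, LinearMap.proj i) ∘ₗ T
  have l_apply (p : E → ℝ) : l p = ∑ i, T p i := by simp [l]
  simp only [mass, ← l_apply, ← integral_linearMap]
  refine (ofReal_integral_eq_lintegral_ofReal
    (l.toContinuousLinearMap.integrable_comp (integrable_coe P)) (.of_forall fun μ => ?_)).symm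
  exact (Fintype.sum_nonneg (hT μ μ.2.1)).trans_eq (l_apply μ).symm

end ProbVec

end Barycenter

section Uniqueness

theorem ofReal_le_ofReal_add_of_lipschitzWith {X : Type*} [PseudoEMetricSpace X] {L : NNReal}
    {f : X → ℝ} (hf : LipschitzWith L f) (x y : X) :
    ENNReal.ofReal (f x) ≤ ENNReal.ofReal (f y) + L * edist x y := by
  calc ENNReal.ofReal (f x) ≤ ENNReal.ofReal (f y + |f x - f y|) :=
        ENNReal.ofReal_le_ofReal (by linarith [le_abs_self (f x - f y)])
    _ ≤ ENNReal.ofReal (f y) + ENNReal.ofReal |f x - f y| := ENNReal.ofReal_add_le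
    _ = ENNReal.ofReal (f y) + edist (f x) (f y) := by rw [edist_dist, Real.dist_eq]
    _ ≤ ENNReal.ofReal (f y) + L * edist x y := by gcongr; exact hf x y

theorem integral_pow_apply_eq {X : Type*} [TopologicalSpace X] [MeasurableSpace X] {P : Measure X}
    {T : Module.End ℝ C(X, ℝ)} (hT : ∀ f, ∫ x, T f x ∂P = ∫ x, f x ∂P) (n : ℕ) (f : C(X, ℝ)) :
    ∫ x, (T ^ n) f x ∂P = ∫ x, f x ∂P := by
  induction n with
  | zero => rfl
  | succ n ih => rw [pow_succ', Module.End.mul_apply, hT, ih]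

variable {E F : Type*} [Fintype E] [Nonempty E] [MeasurableSpace F] {M : F → E → E → ℝ}
  {φ : Measure F}

/-- The expected value of `f` at the time-`n` filter started from `q`, when the observations follow
the law started from `p`. -/
noncomputable def mismatchedMean (M : F → E → E → ℝ) (φ : Measure F) (f : ProbVec E → ℝ) (n : ℕ)
    (p q : E → ℝ) : ℝ≥0∞ :=
  ∫⁻ ys : Fin n → F, mass (rowPath M ys p) * ENNReal.ofReal (f (ProbVec.normalize (rowPath M ys q)))
    ∂(Measure.pi fun _ => φ)

namespace IsHMMDensity

variable (hM : IsHMMDensity M φ)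

include hM

theorem measurable_mismatchedMean_integrand {f : ProbVec E → ℝ} (hf : Measurable f) {n : ℕ}
    {α : Type*} [MeasurableSpace α] {ys : α → Fin n → F} {p q : α → E → ℝ} (hys : Measurable ys)
    (hp : Measurable p) (hq : Measurable q) :
    Measurable fun a => mass (rowPath M (ys a) (p a)) *
      ENNReal.ofReal (f (ProbVec.normalize (rowPath M (ys a) (q a)))) :=
  (measurable_mass.comp ((measurable_rowPath hM.measurable n).comp (hp.prodMk hys))).mul
    (hf.comp (ProbVec.measurable_normalize.comp
      ((measurable_rowPath hM.measurable n).comp (hq.prodMk hys)))).ennreal_ofReal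

theorem mismatchedMean_le_add {L : NNReal} {f : ProbVec E → ℝ} (hf : LipschitzWith L f) (n : ℕ)
    (p q q' : E → ℝ) :
    mismatchedMean M φ f n p q ≤ mismatchedMean M φ f n p q' +
      L * ∫⁻ ys : Fin n → F, mass (rowPath M ys p) *
        edist (ProbVec.normalize (rowPath M ys q)) (ProbVec.normalize (rowPath M ys q'))
        ∂(Measure.pi fun _ => φ) := by
  rw [mismatchedMean, mismatchedMean, ← lintegral_const_mul' _ _ ENNReal.coe_ne_top,
    ← lintegral_add_left (hM.measurable_mismatchedMean_integrand hf.continuous.measurable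
      measurable_id' measurable_const measurable_const)]
  refine lintegral_mono fun ys => ?_
  rw [mul_left_comm, ← mul_add]
  gcongr
  exact ofReal_le_ofReal_add_of_lipschitzWith hf _ _

theorem mismatchedMean_le_mismatchedMean_self_add {L : NNReal} {f : ProbVec E → ℝ}
    (hf : LipschitzWith L f) (n : ℕ) (p q : E → ℝ) :
    mismatchedMean M φ f n p q ≤ mismatchedMean M φ f n p p + L * filterGap M φ n p q := by
  simpa only [filterGap, weightedEdist, edist_comm] using hM.mismatchedMean_le_add hf n p q p

theorem mismatchedMean_self_le_mismatchedMean_add {L : NNReal} {f : ProbVec E → ℝ}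
    (hf : LipschitzWith L f) (n : ℕ) (p q : E → ℝ) :
    mismatchedMean M φ f n p p ≤ mismatchedMean M φ f n p q + L * filterGap M φ n p q :=
  hM.mismatchedMean_le_add hf n p p q

variable [SigmaFinite φ]

theorem mismatchedMean_self {f : C(ProbVec E, ℝ)} (hf : 0 ≤ f) (n : ℕ) (μ : ProbVec E) :
    mismatchedMean M φ f n μ μ = ENNReal.ofReal ((hM.filterOp ^ n) f μ) := by
  rw [← homogExtend_coe ((hM.filterOp ^ n) f) μ, ← hM.lintegral_homogExtend_rowPath hf n μ.2.1]
  refine lintegral_congr fun ys => ?_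
  rw [homogExtend, ENNReal.ofReal_mul (Fintype.sum_nonneg (rowPath_nonneg hM.nonneg ys μ.2.1)),
    mass]

theorem lintegral_mismatchedMean {f : ProbVec E → ℝ} (hf : Measurable f) (n : ℕ)
    (P : ProbabilityMeasure (ProbVec E)) (q : E → ℝ) :
    ∫⁻ μ, mismatchedMean M φ f n (μ : ProbVec E) q ∂(P : Measure (ProbVec E)) =
      mismatchedMean M φ f n (ProbVec.barycenter P) q := by
  simp only [mismatchedMean]
  rw [lintegral_lintegral_swap (hM.measurable_mismatchedMean_integrand hf measurable_snd
    (measurable_subtype_coe.comp measurable_fst) measurable_const).aemeasurable]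
  refine lintegral_congr fun ys => ?_
  rw [lintegral_mul_const' _ _ ENNReal.ofReal_ne_top,
    ProbVec.lintegral_mass_linearMap P _ fun p hp => rowPath_nonneg hM.nonneg ys hp]

theorem measurable_filterGap_left {α : Type*} [MeasurableSpace α] {p : α → E → ℝ}
    (hp : Measurable p) (n : ℕ) (q : E → ℝ) : Measurable fun a => filterGap M φ n (p a) q := by
  have measurable_path {r : α → E → ℝ} (hr : Measurable r) :
      Measurable fun z : α × (Fin n → F) => rowPath M z.2 (r z.1) :=
    (measurable_rowPath hM.measurable n).comp ((hr.comp measurable_fst).prodMk measurable_snd)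
  exact (measurable_weightedEdist (measurable_path hp)
    (measurable_path measurable_const)).lintegral_prod_right'

theorem tendsto_lintegral_filterGap (hinj : ∀ v, (∀ n, obsNorm M φ n v = 0) → v = 0)
    (P : ProbabilityMeasure (ProbVec E)) :
    Tendsto (fun n => ∫⁻ μ : ProbVec E, filterGap M φ n μ (ProbVec.barycenter P)
      ∂(P : Measure (ProbVec E))) atTop (𝓝 0) := by
  obtain ⟨K, hK⟩ := ProbVec.ae_le_smul_barycenter P
  rw [← lintegral_zero (μ := (P : Measure (ProbVec E)))]
  refine tendsto_lintegral_of_dominated_convergence 1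
    (fun n => hM.measurable_filterGap_left measurable_subtype_coe n _)
    (fun n => .of_forall fun μ => ?_) (by simp) ?_
  · exact (hM.filterGap_le_mass n μ.2.1 _).trans_eq μ.mass_coe
  · filter_upwards [hK] with μ hμ
    exact hM.tendsto_filterGap hinj μ.2.1 (ProbVec.barycenter P).2.1 hμ
      (ProbVec.barycenter P).mass_coe

section Invariant

variable {P : ProbabilityMeasure (ProbVec E)} (hP : IsPiInvariant M φ P) {L : NNReal}
  {f : C(ProbVec E, ℝ)} (hf : 0 ≤ f)

include hP hf

theorem lintegral_mismatchedMean_self (n : ℕ) :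
    ∫⁻ μ, mismatchedMean M φ f n (μ : ProbVec E) μ ∂(P : Measure (ProbVec E)) =
      ENNReal.ofReal (∫ μ, f μ ∂(P : Measure (ProbVec E))) := by
  have iterate_nonneg := (hM.isMarkovOperator_filterOp.pow n).map_nonneg f hf
  simp only [hM.mismatchedMean_self hf]
  rw [← integral_pow_apply_eq (hM.isPiInvariant_iff.1 hP) n f]
  exact (ofReal_integral_eq_lintegral_ofReal
    (((hM.filterOp ^ n) f).continuous.integrable_of_hasCompactSupport
      (HasCompactSupport.of_compactSpace _)) (.of_forall iterate_nonneg)).symm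

variable (hL : LipschitzWith L f)

include hL

theorem ofReal_filterOp_pow_barycenter_le (n : ℕ) :
    ENNReal.ofReal ((hM.filterOp ^ n) f (ProbVec.barycenter P)) ≤
      ENNReal.ofReal (∫ μ, f μ ∂(P : Measure (ProbVec E))) +
        L * ∫⁻ μ : ProbVec E, filterGap M φ n μ (ProbVec.barycenter P)
          ∂(P : Measure (ProbVec E)) := by
  rw [← hM.mismatchedMean_self hf, ← hM.lintegral_mismatchedMean f.continuous.measurable,
    ← hM.lintegral_mismatchedMean_self hP hf n, ← lintegral_const_mul' _ _ ENNReal.coe_ne_top,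
    ← lintegral_add_right _ ((hM.measurable_filterGap_left measurable_subtype_coe n
      _).const_mul _)]
  exact lintegral_mono fun μ => hM.mismatchedMean_le_mismatchedMean_self_add hL n μ _

theorem ofReal_integral_le_filterOp_pow_barycenter_add (n : ℕ) :
    ENNReal.ofReal (∫ μ, f μ ∂(P : Measure (ProbVec E))) ≤
      ENNReal.ofReal ((hM.filterOp ^ n) f (ProbVec.barycenter P)) +
        L * ∫⁻ μ : ProbVec E, filterGap M φ n μ (ProbVec.barycenter P)
          ∂(P : Measure (ProbVec E)) := by
  rw [← hM.mismatchedMean_self hf, ← hM.lintegral_mismatchedMean f.continuous.measurable,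
    ← hM.lintegral_mismatchedMean_self hP hf n, ← lintegral_const_mul' _ _ ENNReal.coe_ne_top,
    ← lintegral_add_right _ ((hM.measurable_filterGap_left measurable_subtype_coe n
      _).const_mul _)]
  exact lintegral_mono fun μ => hM.mismatchedMean_self_le_mismatchedMean_add hL n μ _

theorem tendsto_filterOp_pow_barycenter (hinj : ∀ v, (∀ n, obsNorm M φ n v = 0) → v = 0) :
    Tendsto (fun n => (hM.filterOp ^ n) f (ProbVec.barycenter P)) atTop
      (𝓝 (∫ μ, f μ ∂(P : Measure (ProbVec E)))) := by
  let m := ENNReal.ofReal (∫ μ, f μ ∂(P : Measure (ProbVec E)))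
  let error (n : ℕ) : ℝ≥0∞ := L * ∫⁻ μ : ProbVec E, filterGap M φ n μ (ProbVec.barycenter P)
    ∂(P : Measure (ProbVec E))
  have tendsto_error : Tendsto error atTop (𝓝 0) := by
    simpa using ENNReal.Tendsto.const_mul (hM.tendsto_lintegral_filterGap hinj P)
      (Or.inr (ENNReal.coe_ne_top (r := L)))
  have tendsto_lower : Tendsto (fun n => m - error n) atTop (𝓝 m) := by
    simpa using ENNReal.Tendsto.sub tendsto_const_nhds tendsto_error (.inr ENNReal.zero_ne_top)
  have tendsto_upper : Tendsto (fun n => m + error n) atTop (𝓝 m) := by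
    simpa using tendsto_const_nhds.add tendsto_error
  have tendsto_ofReal := tendsto_of_tendsto_of_tendsto_of_le_of_le tendsto_lower tendsto_upper
    (fun n => tsub_le_iff_right.2 (hM.ofReal_integral_le_filterOp_pow_barycenter_add hP hf hL n))
    (hM.ofReal_filterOp_pow_barycenter_le hP hf hL)
  have iterate_nonneg (n : ℕ) : 0 ≤ (hM.filterOp ^ n) f (ProbVec.barycenter P) :=
    (hM.isMarkovOperator_filterOp.pow n).map_nonneg f hf _
  have integral_nonneg : 0 ≤ ∫ μ, f μ ∂(P : Measure (ProbVec E)) := integral_nonneg fun μ => hf μ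
  simpa [Function.comp_def, m, ENNReal.toReal_ofReal, iterate_nonneg, integral_nonneg] using
    (ENNReal.tendsto_toReal ENNReal.ofReal_ne_top).comp tendsto_ofReal

end Invariant

end IsHMMDensity

end Uniqueness

section InvariantMeasure

variable {E F : Type*} [Fintype E] [Nonempty E] [MeasurableSpace F] {M : F → E → E → ℝ}
  {φ : Measure F}

namespace IsHMMDensity

variable (hM : IsHMMDensity M φ)

include hM

theorem eq_of_isPiInvariant_of_barycenter_eq [SigmaFinite φ]
    (hinj : ∀ v, (∀ n, obsNorm M φ n v = 0) → v = 0) {P Q : ProbabilityMeasure (ProbVec E)}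
    (hP : IsPiInvariant M φ P) (hQ : IsPiInvariant M φ Q)
    (hPQ : ProbVec.barycenter P = ProbVec.barycenter Q) : P = Q := by
  refine probabilityMeasure_ext_of_lipschitz fun L f hf hL => ?_
  let g : C(ProbVec E, ℝ) := ⟨f, hL.continuous⟩
  refine tendsto_nhds_unique (hM.tendsto_filterOp_pow_barycenter hP (f := g) hf hL hinj) ?_
  rw [hPQ]
  exact hM.tendsto_filterOp_pow_barycenter hQ (f := g) hf hL hinj

theorem barycenter_stationary {P : ProbabilityMeasure (ProbVec E)} (hP : IsPiInvariant M φ P)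
    (j : E) :
    ∑ i, (ProbVec.barycenter P : E → ℝ) i * transMat M φ i j =
      (ProbVec.barycenter P : E → ℝ) j := by
  let coord : C(ProbVec E, ℝ) :=
    ⟨fun μ => (μ : E → ℝ) j, (continuous_apply j).comp continuous_subtype_val⟩
  have homogExtend_coord {p : E → ℝ} (hp : 0 ≤ p) : homogExtend coord p = p j :=
    congrFun (ProbVec.sum_smul_normalize hp) j
  let step : (E → ℝ) →ₗ[ℝ] ℝ := ∑ i, transMat M φ i j • LinearMap.proj i
  have step_apply (p : E → ℝ) : step p = ∑ i, p i * transMat M φ i j := by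
    simp [step, mul_comm]
  have filterOp_coord (μ : ProbVec E) : hM.filterOp coord μ = step μ := by
    simp only [hM.filterOp_apply, homogExtend_coord (rowMul_nonneg hM.nonneg μ.2.1 _),
      hM.integral_rowMul, step_apply]
  rw [← step_apply, ← ProbVec.integral_linearMap]
  simp only [← filterOp_coord]
  rw [hM.isPiInvariant_iff.1 hP]
  exact ProbVec.integral_linearMap P (LinearMap.proj j)

end IsHMMDensity

end InvariantMeasure

theorem unique_invariant_measure_of_observability_finite_general {E F : Type*} [Finite E]
    [Nonempty E] [MeasurableSpace F] (φ : Measure F) [SigmaFinite φ] (M : F → E → E → ℝ)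
    (hMmeas : ∀ i j, Measurable fun y => M y i j) (hMnn : ∀ y i j, 0 ≤ M y i j)
    (hstat : ∀ ρ ρ' : ProbVec E,
      (∀ j, ∑' i, (ρ : E → ℝ) i * transMat M φ i j = (ρ : E → ℝ) j) →
      (∀ j, ∑' i, (ρ' : E → ℝ) i * transMat M φ i j = (ρ' : E → ℝ) j) → ρ = ρ')
    (Q : ProbVec E → Measure (ℕ → F)) (hQprob : ∀ μ, IsProbabilityMeasure (Q μ))
    (hQ : ∀ μ, IsObservationLaw M φ μ (Q μ)) (hObs : ∀ μ ν, Q μ = Q ν → μ = ν) :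
    ∃! 𝕄 : ProbabilityMeasure (ProbVec E), IsPiInvariant M φ 𝕄 := by
  have := Fintype.ofFinite E
  have hM := isHMMDensity_of_isObservationLaw hMmeas hMnn hQ
  have obsNorm_injective (v : E → ℝ) : (∀ n, obsNorm M φ n v = 0) → v = 0 :=
    eq_zero_of_obsNorm_eq_zero fun μ ν h =>
      hObs μ ν ((hQ μ).eq_of_obsNorm_sub_eq_zero hMmeas (hQ ν) h)
  refine existsUnique_of_exists_of_unique
    (hM.isMarkovOperator_filterOp.exists_invariant.imp fun _ => hM.isPiInvariant_iff.2)
    fun 𝕄 𝕄' h h' => hM.eq_of_isPiInvariant_of_barycenter_eq obsNorm_injective h h'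
      (hstat _ _ ?_ ?_)
  · simpa only [tsum_fintype] using hM.barycenter_stationary h
  · simpa only [tsum_fintype] using hM.barycenter_stationary h'

/-- If `E` is a finite set and the observability condition (O) holds (`Q_μ = Q_ν`
implies `μ = ν`), then the filter transition kernel `Π` admits a unique invariant
probability measure. -/
theorem unique_invariant_measure_of_observability_finite
    {E : Type*} [Fintype E] [Nonempty E] [DecidableEq E]
    {F : Type*} [TopologicalSpace F] [PolishSpace F] [MeasurableSpace F] [BorelSpace F]
    (φ : Measure F) [SigmaFinite φ]
    (M : F → E → E → ℝ)
    (hMmeas : ∀ i j, Measurable fun y => M y i j)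
    (hMnn : ∀ y i j, 0 ≤ M y i j)
    (hMbd : ∀ᵐ y ∂φ, ∃ C : ℝ, ∀ (i : E) (s : Finset E), ∑ j ∈ s, M y i j ≤ C)
    (hPtrans : ∀ i, HasSum (fun j => transMat M φ i j) 1)
    (hPirr : ∀ i j : E, ∃ n : ℕ, 0 < matPow (transMat M φ) n i j)
    (lam : ProbVec E)
    (hlamInv : ∀ j, ∑' i, (lam : E → ℝ) i * transMat M φ i j = (lam : E → ℝ) j)
    (hlamUniq : ∀ ρ : ProbVec E,
      (∀ j, ∑' i, (ρ : E → ℝ) i * transMat M φ i j = (ρ : E → ℝ) j) → ρ = lam)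
    (Q : ProbVec E → Measure (ℕ → F))
    (hQprob : ∀ μ, IsProbabilityMeasure (Q μ))
    (hQ : ∀ (μ : ProbVec E) (n : ℕ) (A : Set (Fin n → F)), MeasurableSet A →
      Q μ {y : ℕ → F | (fun k : Fin n => y k) ∈ A} =
        ∫⁻ v in A, ENNReal.ofReal (rowTot (rowIter M (μ : E → ℝ) (List.ofFn v)))
          ∂(Measure.pi fun _ => φ))
    (hObs : ∀ μ ν : ProbVec E, Q μ = Q ν → μ = ν) :
    ∃! 𝕄 : ProbabilityMeasure (ProbVec E), IsPiInvariant M φ 𝕄 :=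
  unique_invariant_measure_of_observability_finite_general φ M hMmeas hMnn
    (fun ρ ρ' hρ hρ' => (hlamUniq ρ hρ).trans (hlamUniq ρ' hρ').symm) Q hQprob hQ hObs
end

section
/- Let S be a standard Borel space and κ a Markov kernel from S to S that admits a unique κ-invariant probability measure π (i.e. π is the only probability measure satisfying ∫ κ(x, A) π(dx) = π(A) for all measurable A). Let P_π be the law on S^ℕ of the Markov chain with initial distribution π and transition kernel κ (the Ionescu–Tulcea trajectory measure). Then P_π is invariant under the left shift θ : S^ℕ → S^ℕ, (θ x)(n) = x(n+1), and θ is ergodic with respect to P_π. -/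
open MeasureTheory Filter Topology ProbabilityTheory

open scoped ENNReal

/-!
Let `I` be a shift-invariant event with `P I ≠ 0`. Approximate `I` by an event `C` of the past up
to some time `m`. By invariance, `I` meets an event and its `m`-fold shift with the same
probability, while the Markov property at time `n + m` holds on `C` exactly; letting the error
`P (I ∆ C)` tend to `0` shows that the Markov property at time `n` persists on `I`. So `P[|I]` is
again the law of a stationary Markov chain with kernel `κ`, and its initial distribution is
`κ`-invariant and absolutely continuous with respect to `π`, hence equal to `π`. Since the initial
distribution and the kernel determine the law, `P[|I] = P`, that is, `P I = 1`.
-/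

section Approximation

variable {α : Type*} [MeasurableSpace α] {μ : Measure α}

theorem setLIntegral_le_add_mul_measure_sdiff {f : α → ℝ≥0∞} {M : ℝ≥0∞} (hf : ∀ x, f x ≤ M)
    (s t : Set α) : ∫⁻ x in s, f x ∂μ ≤ ∫⁻ x in t, f x ∂μ + M * μ (s \ t) :=
  calc ∫⁻ x in s, f x ∂μ ≤ ∫⁻ x in t ∪ s \ t, f x ∂μ :=
        lintegral_mono_set (by rw [Set.union_sdiff_self]; exact Set.subset_union_right)
    _ ≤ ∫⁻ x in t, f x ∂μ + ∫⁻ x in s \ t, f x ∂μ := lintegral_union_le _ _ _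
    _ ≤ ∫⁻ x in t, f x ∂μ + M * μ (s \ t) := by
        rw [← setLIntegral_const]
        gcongr
        exact hf _

theorem setLIntegral_comp_iterate_of_preimage_eq {T : α → α} (hT : MeasurePreserving T μ μ)
    {s : Set α} (hs : MeasurableSet s) (hTs : T ⁻¹' s = s)
    {f : α → ℝ≥0∞} (hf : Measurable f) (m : ℕ) :
    ∫⁻ x in s, f (T^[m] x) ∂μ = ∫⁻ x in s, f x ∂μ := by
  conv_lhs => rw [← Function.IsFixedPt.preimage_iterate hTs m]
  exact (hT.iterate m).setLIntegral_comp_preimage hs hf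

theorem setLIntegral_le_of_forall_measureDense {T : α → α}
    (hT : MeasurePreserving T μ μ) {𝒜 : Set (Set α)} (h𝒜 : μ.MeasureDense 𝒜)
    {f g : α → ℝ≥0∞} (hf : Measurable f) (hg : Measurable g) {M : ℝ≥0∞} (hM : M ≠ ∞)
    (hfM : ∀ x, f x ≤ M) (hgM : ∀ x, g x ≤ M)
    (hfg : ∀ C ∈ 𝒜, ∃ m, ∫⁻ x in C, f (T^[m] x) ∂μ ≤ ∫⁻ x in C, g (T^[m] x) ∂μ)
    {s : Set α} (hs : MeasurableSet s) (hμs : μ s ≠ ∞) (hTs : T ⁻¹' s = s) :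
    ∫⁻ x in s, f x ∂μ ≤ ∫⁻ x in s, g x ∂μ := by
  have approx (ε : ℝ) (hε : 0 < ε) :
      ∫⁻ x in s, f x ∂μ ≤ ∫⁻ x in s, g x ∂μ + 2 * M * ENNReal.ofReal ε := by
    obtain ⟨C, hC, hsC⟩ := h𝒜.approx s hs hμs ε hε
    obtain ⟨m, hm⟩ := hfg C hC
    calc ∫⁻ x in s, f x ∂μ
      _ = ∫⁻ x in s, f (T^[m] x) ∂μ :=
        (setLIntegral_comp_iterate_of_preimage_eq hT hs hTs hf m).symm
      _ ≤ ∫⁻ x in C, f (T^[m] x) ∂μ + M * μ (s \ C) :=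
        setLIntegral_le_add_mul_measure_sdiff (fun _ => hfM _) s C
      _ ≤ ∫⁻ x in C, g (T^[m] x) ∂μ + M * μ (s \ C) := by gcongr
      _ ≤ ∫⁻ x in s, g (T^[m] x) ∂μ + M * μ (C \ s) + M * μ (s \ C) := by
        gcongr
        exact setLIntegral_le_add_mul_measure_sdiff (fun _ => hgM _) C s
      _ ≤ ∫⁻ x in s, g (T^[m] x) ∂μ + M * ENNReal.ofReal ε + M * ENNReal.ofReal ε := by
        gcongr
        · exact (measure_mono Set.subset_union_right).trans hsC.le
        · exact (measure_mono Set.subset_union_left).trans hsC.le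
      _ = ∫⁻ x in s, g x ∂μ + 2 * M * ENNReal.ofReal ε := by
        rw [setLIntegral_comp_iterate_of_preimage_eq hT hs hTs hg m]
        ring
  have error_tendsto : Tendsto (fun ε : ℝ => 2 * M * ENNReal.ofReal ε) (𝓝[>] 0) (𝓝 0) := by
    have h2M : 2 * M ≠ ∞ := ENNReal.mul_ne_top ENNReal.ofNat_ne_top hM
    simpa using (ENNReal.Tendsto.const_mul (ENNReal.tendsto_ofReal tendsto_id)
      (.inr h2M)).mono_left (nhdsWithin_le_nhds (a := (0 : ℝ)) (s := Set.Ioi 0))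
  refine ge_of_tendsto (x := 𝓝[>] (0 : ℝ)) ?_ (eventually_mem_nhdsWithin.mono approx)
  simpa using error_tendsto.const_add (∫⁻ x in s, g x ∂μ)

theorem setLIntegral_eq_of_forall_measureDense {T : α → α}
    (hT : MeasurePreserving T μ μ) {𝒜 : Set (Set α)} (h𝒜 : μ.MeasureDense 𝒜)
    {f g : α → ℝ≥0∞} (hf : Measurable f) (hg : Measurable g) {M : ℝ≥0∞} (hM : M ≠ ∞)
    (hfM : ∀ x, f x ≤ M) (hgM : ∀ x, g x ≤ M)
    (hfg : ∀ C ∈ 𝒜, ∃ m, ∫⁻ x in C, f (T^[m] x) ∂μ = ∫⁻ x in C, g (T^[m] x) ∂μ)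
    {s : Set α} (hs : MeasurableSet s) (hμs : μ s ≠ ∞) (hTs : T ⁻¹' s = s) :
    ∫⁻ x in s, f x ∂μ = ∫⁻ x in s, g x ∂μ :=
  le_antisymm
    (setLIntegral_le_of_forall_measureDense hT h𝒜 hf hg hM hfM hgM
      (fun C hC => (hfg C hC).imp fun _ => le_of_eq) hs hμs hTs)
    (setLIntegral_le_of_forall_measureDense hT h𝒜 hg hf hM hgM hfM
      (fun C hC => (hfg C hC).imp fun _ => ge_of_eq) hs hμs hTs)

end Approximation

section PathSpace

variable {S : Type*}

/-- The left shift on one-sided sequences. -/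
def leftShift (x : ℕ → S) : ℕ → S := fun k => x (k + 1)

/-- The first `n + 1` coordinates `x 0, …, x n` of a path. -/
def history (n : ℕ) (x : ℕ → S) : Fin (n + 1) → S := fun k => x k

theorem leftShift_iterate_apply (m : ℕ) (x : ℕ → S) (k : ℕ) : leftShift^[m] x k = x (k + m) := by
  induction m generalizing x with
  | zero => rfl
  | succ m ih => rw [Function.iterate_succ_apply, ih, leftShift, Nat.add_assoc]

variable [MeasurableSpace S]

/-- The σ-algebra of events depending only on the coordinates `0, …, n`: the natural filtration of
the coordinate process. -/
abbrev past (S : Type*) [MeasurableSpace S] (n : ℕ) : MeasurableSpace (ℕ → S) :=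
  MeasurableSpace.comap (history n) MeasurableSpace.pi

@[fun_prop]
theorem measurable_leftShift : Measurable (leftShift : (ℕ → S) → ℕ → S) :=
  measurable_pi_iff.2 fun k => measurable_pi_apply (k + 1)

@[fun_prop]
theorem measurable_history (n : ℕ) : Measurable (history n : (ℕ → S) → Fin (n + 1) → S) :=
  measurable_pi_iff.2 fun k => measurable_pi_apply (k : ℕ)

theorem past_le (n : ℕ) : past S n ≤ MeasurableSpace.pi :=
  (measurable_history n).comap_le

theorem measurable_past_coords {ι : Type*} {n : ℕ} {e : ι → ℕ} (he : ∀ i, e i ≤ n) :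
    Measurable[past S n] (fun (x : ℕ → S) i => x (e i)) :=
  have h : Measurable fun (y : Fin (n + 1) → S) i => y ⟨e i, Nat.lt_succ_of_le (he i)⟩ := by
    fun_prop
  h.comp (comap_measurable (history n))

theorem past_mono : Monotone (past S) := fun m _ hmn =>
  Measurable.comap_le <| measurable_past_coords fun k : Fin (m + 1) => k.is_le.trans hmn

theorem measurable_past_leftShift_iterate (n m : ℕ) :
    Measurable[past S (n + m), past S n] (leftShift^[m]) := by
  have history_comp : history n ∘ leftShift^[m] = fun (x : ℕ → S) (k : Fin (n + 1)) => x (k + m) :=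
    funext fun x => funext fun k => leftShift_iterate_apply m x k
  rw [measurable_comap_iff, history_comp]
  exact measurable_past_coords fun k => Nat.add_le_add_right k.is_le m

theorem exists_measurableSet_past_of_mem_measurableCylinders {C : Set (ℕ → S)}
    (hC : C ∈ measurableCylinders fun _ : ℕ => S) : ∃ n, MeasurableSet[past S n] C := by
  obtain ⟨J, t, ht, rfl⟩ := (mem_measurableCylinders C).1 hC
  have hJ : Measurable[past S (J.sup id)] (J.restrict : (ℕ → S) → J → S) :=
    measurable_past_coords fun j : J => Finset.le_sup (f := id) j.2
  exact ⟨J.sup id, hJ ht⟩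

theorem measure_ext_of_map_history {P Q : Measure (ℕ → S)} [IsFiniteMeasure P]
    (h : ∀ n, P.map (history n) = Q.map (history n)) : P = Q := by
  have h_past {n : ℕ} {B : Set (ℕ → S)} (hB : MeasurableSet[past S n] B) : P B = Q B := by
    obtain ⟨s, hs, rfl⟩ := hB
    rw [← Measure.map_apply (measurable_history n) hs, h,
      Measure.map_apply (measurable_history n) hs]
  refine ext_of_generate_finite (measurableCylinders fun _ : ℕ => S)
    generateFrom_measurableCylinders.symm isPiSystem_measurableCylinders (fun C hC => ?_)
    (h_past (n := 0) .univ)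
  obtain ⟨n, hn⟩ := exists_measurableSet_past_of_mem_measurableCylinders hC
  exact h_past hn

theorem history_succ (n : ℕ) : (history (n + 1) : (ℕ → S) → Fin (n + 2) → S) =
    (MeasurableEquiv.piFinSuccAbove (fun _ => S) (Fin.last (n + 1))).symm ∘ Prod.swap ∘
      fun x => (history n x, x (n + 1)) := by
  funext x
  refine (MeasurableEquiv.eq_symm_apply _).2 (Prod.ext rfl (funext fun k => ?_))
  simp [history, MeasurableEquiv.piFinSuccAbove, Fin.init]

theorem measurable_kernel_coord (κ : Kernel S S) (n : ℕ) {A : Set S} (hA : MeasurableSet A) :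
    Measurable fun x : ℕ → S => κ (x n) A :=
  (κ.measurable_coe hA).comp (measurable_pi_apply n)

end PathSpace

/-- `P` is the law of a time-homogeneous Markov chain with transition kernel `κ` and an arbitrary
initial distribution: for every event `B` of the past up to time `n`, the law of `x (n + 1)` on `B`
is obtained by averaging `κ (x n)` over `B`. -/
def IsMarkovLaw {S : Type*} [MeasurableSpace S] (κ : Kernel S S) (P : Measure (ℕ → S)) : Prop :=
  ∀ (n : ℕ) (A : Set S), MeasurableSet A → ∀ B : Set (ℕ → S), MeasurableSet[past S n] B →
    P (B ∩ {x | x (n + 1) ∈ A}) = ∫⁻ x in B, κ (x n) A ∂P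

namespace IsMarkovLaw

variable {S : Type*} [MeasurableSpace S] {κ : Kernel S S} {P Q : Measure (ℕ → S)}

theorem smul (hP : IsMarkovLaw κ P) (c : ℝ≥0∞) : IsMarkovLaw κ (c • P) := fun n A hA B hB => by
  rw [Measure.smul_apply, hP n A hA B hB, setLIntegral_smul_measure]

theorem map_leftShift (hP : IsMarkovLaw κ P) : IsMarkovLaw κ (P.map leftShift) := by
  intro n A hA B hB
  have hB' := past_le n B hB
  have hX : MeasurableSet {x : ℕ → S | x (n + 1) ∈ A} := measurable_pi_apply (n + 1) hA
  rw [Measure.map_apply measurable_leftShift (hB'.inter hX),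
    setLIntegral_map hB' (measurable_kernel_coord κ n hA) measurable_leftShift]
  exact hP (n + 1) A hA _ (measurable_past_leftShift_iterate n 1 hB)

theorem map_eval_one_eq_bind (hP : IsMarkovLaw κ P) :
    P.map (fun x => x 1) = (P.map fun x => x 0).bind κ := by
  ext A hA
  rw [Measure.map_apply (measurable_pi_apply 1) hA, Measure.bind_apply hA κ.aemeasurable,
    lintegral_map (κ.measurable_coe hA) (measurable_pi_apply 0)]
  simpa [Set.preimage] using hP 0 A hA Set.univ .univ

theorem map_history_prodMk [IsFiniteMeasure P] [IsSFiniteKernel κ] (hP : IsMarkovLaw κ P)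
    (n : ℕ) :
    P.map (fun x => (history n x, x (n + 1))) =
      P.map (history n) ⊗ₘ κ.comap (fun y => y (Fin.last n)) (measurable_pi_apply _) := by
  refine Measure.ext_prod fun {s A} hs hA => ?_
  rw [Measure.map_apply (by fun_prop) (hs.prod hA), Measure.compProd_apply_prod hs hA,
    setLIntegral_map hs (Kernel.measurable_coe _ hA) (measurable_history n)]
  exact hP n A hA _ ⟨s, hs, rfl⟩

theorem eq_of_map_eval_zero [IsFiniteMeasure P] [IsFiniteMeasure Q] [IsSFiniteKernel κ]
    (hP : IsMarkovLaw κ P) (hQ : IsMarkovLaw κ Q)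
    (h0 : P.map (fun x => x 0) = Q.map (fun x => x 0)) : P = Q := by
  refine measure_ext_of_map_history fun n => ?_
  induction n with
  | zero =>
    have history_zero : (history 0 : (ℕ → S) → Fin 1 → S) = (fun a _ => a) ∘ fun x => x 0 := by
      funext x k
      rw [Fin.fin_one_eq_zero k]
      rfl
    rw [history_zero, ← Measure.map_map (by fun_prop) (by fun_prop), h0,
      Measure.map_map (by fun_prop) (by fun_prop)]
  | succ n ih =>
    have map_history_succ (R : Measure (ℕ → S)) : R.map (history (n + 1)) =
        ((R.map fun x => (history n x, x (n + 1))).map Prod.swap).map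
          (MeasurableEquiv.piFinSuccAbove (fun _ => S) (Fin.last (n + 1))).symm := by
      rw [history_succ, ← Measure.map_map (by fun_prop) (by fun_prop),
        ← Measure.map_map (by fun_prop) (by fun_prop)]
    rw [map_history_succ, map_history_succ, hP.map_history_prodMk, hQ.map_history_prodMk, ih]

theorem measurePreserving_leftShift_iff [IsFiniteMeasure P] [IsSFiniteKernel κ]
    (hP : IsMarkovLaw κ P) :
    MeasurePreserving leftShift P P ↔ κ.Invariant (P.map fun x => x 0) := by
  have map_eval_zero : (P.map leftShift).map (fun x => x 0) = (P.map fun x => x 0).bind κ := by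
    rw [← hP.map_eval_one_eq_bind, Measure.map_map (by fun_prop) measurable_leftShift]
    rfl
  refine ⟨fun h => ?_, fun h => ⟨measurable_leftShift, hP.map_leftShift.eq_of_map_eval_zero hP ?_⟩⟩
  · rw [Kernel.Invariant, ← map_eval_zero, h.map_eq]
  · rw [map_eval_zero, h]

theorem setLIntegral_indicator_leftShift_iterate (hP : IsMarkovLaw κ P) {n m : ℕ} {A : Set S}
    (hA : MeasurableSet A) {B C : Set (ℕ → S)} (hB : MeasurableSet[past S n] B)
    (hC : MeasurableSet[past S m] C) :
    ∫⁻ x in C, (B ∩ {x | x (n + 1) ∈ A}).indicator 1 (leftShift^[m] x) ∂P =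
      ∫⁻ x in C, B.indicator (fun x => κ (x n) A) (leftShift^[m] x) ∂P := by
  have hT : Measurable (leftShift^[m] : (ℕ → S) → ℕ → S) := measurable_leftShift.iterate m
  have hX : MeasurableSet {x : ℕ → S | x (n + 1) ∈ A} := measurable_pi_apply (n + 1) hA
  have hBC : MeasurableSet[past S (n + m)] (leftShift^[m] ⁻¹' B ∩ C) :=
    (measurable_past_leftShift_iterate n m hB).inter (past_mono (Nat.le_add_left m n) C hC)
  simp_rw [← Set.indicator_comp_right (leftShift^[m])]
  rw [setLIntegral_indicator (hT ((past_le n B hB).inter hX)),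
    setLIntegral_indicator (hT (past_le n B hB)), Set.preimage_inter, Set.inter_right_comm]
  simpa [leftShift_iterate_apply, Nat.add_right_comm] using hP (n + m) A hA _ hBC

theorem restrict_of_leftShift_preimage_eq [IsFiniteMeasure P] [IsFiniteKernel κ]
    (hP : IsMarkovLaw κ P) (hT : MeasurePreserving leftShift P P)
    {I : Set (ℕ → S)} (hI : MeasurableSet I) (hTI : leftShift ⁻¹' I = I) :
    IsMarkovLaw κ (P.restrict I) := by
  intro n A hA B hB
  have hB' := past_le n B hB
  have hBX : MeasurableSet (B ∩ {x | x (n + 1) ∈ A}) := hB'.inter (measurable_pi_apply (n + 1) hA)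
  suffices h : ∫⁻ x in I, (B ∩ {x | x (n + 1) ∈ A}).indicator 1 x ∂P =
      ∫⁻ x in I, B.indicator (fun x => κ (x n) A) x ∂P by
    rwa [lintegral_indicator_one hBX, lintegral_indicator hB'] at h
  have hdense : P.MeasureDense (measurableCylinders fun _ : ℕ => S) :=
    .of_generateFrom_isSetAlgebra_finite P isSetAlgebra_measurableCylinders
      generateFrom_measurableCylinders.symm
  refine setLIntegral_eq_of_forall_measureDense hT hdense (measurable_one.indicator hBX)
    ((measurable_kernel_coord κ n hA).indicator hB') (M := max 1 κ.bound)
    (max_lt ENNReal.one_lt_top κ.bound_lt_top).ne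
    (fun x => ?_) (fun x => ?_) (fun C hC => ?_) hI (measure_ne_top P I) hTI
  · exact (Set.indicator_le_self' (by simp) x).trans (le_max_left _ _)
  · exact (Set.indicator_le_self' (by simp) x).trans
      ((κ.measure_le_bound _ _).trans (le_max_right _ _))
  · obtain ⟨m, hm⟩ := exists_measurableSet_past_of_mem_measurableCylinders hC
    exact ⟨m, hP.setLIntegral_indicator_leftShift_iterate hA hB hm⟩

end IsMarkovLaw

theorem shift_ergodic_of_unique_invariant_measure_general {S : Type*} [MeasurableSpace S]
    (κ : Kernel S S) [IsFiniteKernel κ] (π : Measure S) (hinv : κ.Invariant π)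
    (huniq : ∀ π' : Measure S, IsProbabilityMeasure π' → π' ≪ π → κ.Invariant π' → π' = π)
    (P : Measure (ℕ → S)) [IsProbabilityMeasure P] (hP0 : P.map (fun x => x 0) = π)
    (hP : IsMarkovLaw κ P) : Ergodic leftShift P := by
  have hT : MeasurePreserving leftShift P P :=
    hP.measurePreserving_leftShift_iff.2 (hP0.symm ▸ hinv)
  refine ⟨hT, ⟨fun I hI hTI => eventuallyConst_set'.2 ?_⟩⟩
  rcases eq_or_ne (P I) 0 with hI0 | hI0
  · exact .inl (ae_eq_empty.2 hI0)
  have := cond_isProbabilityMeasure hI0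
  have hQ : IsMarkovLaw κ P[|I] := (hP.restrict_of_leftShift_preimage_eq hT hI hTI).smul _
  have hQT : MeasurePreserving leftShift P[|I] P[|I] := by
    have := hT.restrict_preimage hI
    rw [hTI] at this
    exact this.smul_measure _
  have hQ0 : P[|I].map (fun x => x 0) = π :=
    huniq _ (Measure.isProbabilityMeasure_map (measurable_pi_apply 0).aemeasurable)
      (hP0 ▸ cond_absolutelyContinuous.map (measurable_pi_apply 0))
      (hQ.measurePreserving_leftShift_iff.1 hQT)
  have hQP : P[|I] = P := hQ.eq_of_map_eval_zero hP (hQ0.trans hP0.symm)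
  refine .inr ((ae_eq_univ_iff_measure_eq hI.nullMeasurableSet).2 ?_)
  rw [measure_univ, ← hQP]
  exact cond_apply_self hI0 (measure_ne_top P I)

/-- If a Markov kernel `κ` on a standard Borel space `S` admits a unique invariant
probability measure `π`, then the trajectory measure `P_π` of the stationary Markov
chain is invariant under the left shift, and the shift is ergodic for `P_π`. -/
theorem shift_ergodic_of_unique_invariant_measure
    {S : Type*} [MeasurableSpace S] [StandardBorelSpace S] [Nonempty S]
    (κ : Kernel S S) [IsMarkovKernel κ]
    (π : Measure S) [IsProbabilityMeasure π]
    (hinv : π.bind (fun a => κ a) = π)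
    (huniq : ∀ π' : Measure S, IsProbabilityMeasure π' →
      π'.bind (fun a => κ a) = π' → π' = π)
    (Pπ : Measure (ℕ → S)) [IsProbabilityMeasure Pπ]
    (hP0 : Pπ.map (fun x => x 0) = π)
    (hPstep : ∀ (n : ℕ) (A : Set S), MeasurableSet A →
      ∀ B : Set (ℕ → S),
        MeasurableSet[MeasurableSpace.comap
          (fun x : ℕ → S => fun k : Fin (n + 1) => x k) MeasurableSpace.pi] B →
        Pπ (B ∩ {x : ℕ → S | x (n + 1) ∈ A}) = ∫⁻ x in B, κ (x n) A ∂Pπ) :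
    MeasurePreserving (fun x : ℕ → S => fun k => x (k + 1)) Pπ Pπ ∧
      Ergodic (fun x : ℕ → S => fun k => x (k + 1)) Pπ := by
  have h : Ergodic leftShift Pπ := shift_ergodic_of_unique_invariant_measure_general κ π hinv
    (fun π' hπ' _ hκ => huniq π' hπ' hκ) Pπ hP0 hPstep
  exact ⟨h.toMeasurePreserving, h⟩
end
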